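/- arXiv:1902.04496 — 5 statements merged into one kernel-verified Lean document; each statement's English description precedes it below -/
import Mathlib

section
/- Let v ≥ 2 and let T be a simple graph on v vertices that is a tree (connected with no cycles; equivalently connected with v−1 edges). Then for every real y ≥ 0, det( L(T) + vy·I ) ≤ det( L(P_v) + vy·I ), where P_v is the path graph on v vertices and L(·) denotes the Laplacian matrix. -/
noncomputable instance (n : ℕ) : DecidableRel (SimpleGraph.pathGraph n).Adj :=
  Classical.decRel _

noncomputable section TreeDet

open Classical in
/-- The matrix `L(G) + x I`. -/
def lapX {V : Type*} [Fintype V] (G : SimpleGraph V) (x : ℝ) : Matrix V V ℝ :=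
  Matrix.of fun i j => (if i = j then x + ∑ k, (if G.Adj i k then (1:ℝ) else 0) else 0)
    - (if G.Adj i j then 1 else 0)

theorem lapX_eq {V : Type*} [Fintype V] [DecidableEq V] (G : SimpleGraph V) [DecidableRel G.Adj]
    (x : ℝ) : G.lapMatrix ℝ + x • (1 : Matrix V V ℝ) = lapX G x := by
  ext i j
  have := G.degree_eq_sum_if_adj (R := ℝ) i
  by_cases h : i = j
  · subst h
    simp [lapX, SimpleGraph.lapMatrix, SimpleGraph.degMatrix, SimpleGraph.adjMatrix_apply, add_comm]
    rw [this]
    refine Finset.sum_congr rfl fun k _ => ?_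
    congr
  · simp [lapX, SimpleGraph.lapMatrix, SimpleGraph.degMatrix, SimpleGraph.adjMatrix_apply, h]

/-- Determinant of `L + x I`. -/
def dA {V : Type*} [Fintype V] (G : SimpleGraph V) (x : ℝ) : ℝ :=
  letI := Classical.decEq V
  (lapX G x).det

/-- Determinant of `L + x I` with vertex `w` grounded. -/
def dB {V : Type*} [Fintype V] (G : SimpleGraph V) (x : ℝ) (w : V) : ℝ :=
  letI := Classical.decEq V
  ((lapX G x).updateRow w (Pi.single w 1)).det

section blocks
variable {m n : Type*} [Fintype m] [Fintype n] [DecidableEq m] [DecidableEq n]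

/-- Two matrices joined by an edge. -/
def joinMat (M : Matrix m m ℝ) (N : Matrix n n ℝ) (r : m) (c : n) : Matrix (m ⊕ n) (m ⊕ n) ℝ :=
  Matrix.fromBlocks (M.updateRow r (M r + Pi.single r 1))
    ((0 : Matrix m n ℝ).updateRow r (-Pi.single c 1))
    ((0 : Matrix n m ℝ).updateRow c (-Pi.single r 1))
    (N.updateRow c (N c + Pi.single c 1))

theorem updL (A : Matrix m m ℝ) (B : Matrix m n ℝ) (C : Matrix n m ℝ) (D : Matrix n n ℝ)
    (r : m) (u : m → ℝ) (w : n → ℝ) :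
    (Matrix.fromBlocks A B C D).updateRow (Sum.inl r) (Sum.elim u w) =
      Matrix.fromBlocks (A.updateRow r u) (B.updateRow r w) C D := by
  ext (i | i) (j | j) <;> simp [Matrix.updateRow_apply]

theorem updR (A : Matrix m m ℝ) (B : Matrix m n ℝ) (C : Matrix n m ℝ) (D : Matrix n n ℝ)
    (r : n) (u : m → ℝ) (w : n → ℝ) :
    (Matrix.fromBlocks A B C D).updateRow (Sum.inr r) (Sum.elim u w) =
      Matrix.fromBlocks A B (C.updateRow r u) (D.updateRow r w) := by
  ext (i | i) (j | j) <;> simp [Matrix.updateRow_apply]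

theorem upd_zero (r : m) : (0 : Matrix m n ℝ).updateRow r 0 = 0 := by
  ext i j; simp [Matrix.updateRow_apply]

theorem joinMat_upd (M : Matrix m m ℝ) (N : Matrix n n ℝ) (r : m) (c : n) (u : m → ℝ) :
    ((joinMat M N r c).updateRow (Sum.inl r) (Sum.elim u 0)).det =
      (M.updateRow r u).det * (N.det + (N.updateRow c (Pi.single c 1)).det) := by
  rw [joinMat, updL, Matrix.updateRow_idem, Matrix.updateRow_idem, upd_zero,
    Matrix.det_fromBlocks_zero₁₂, Matrix.det_updateRow_add, Matrix.updateRow_eq_self]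

theorem joinMat_upd2 (M : Matrix m m ℝ) (N : Matrix n n ℝ) (r : m) (c : n) :
    ((joinMat M N r c).updateRow (Sum.inl r) (Sum.elim (Pi.single r 1) (-Pi.single c 1))).det =
      (M.updateRow r (Pi.single r 1)).det * N.det := by
  rw [← Matrix.det_updateRow_add_self _ (i := Sum.inr c) (j := Sum.inl r) (by simp)]
  rw [joinMat, updL]
  have : ∀ (A : Matrix m m ℝ) (B : Matrix m n ℝ) (C : Matrix n m ℝ) (D : Matrix n n ℝ),
    (Matrix.fromBlocks A B C D) (Sum.inr c) + (Matrix.fromBlocks A B C D) (Sum.inl r)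
      = Sum.elim (C c + A r) (D c + B r) := by
    intro A B C D
    ext (j | j) <;> simp [Matrix.fromBlocks]
  rw [this, updR]
  simp only [Matrix.updateRow_idem, Matrix.updateRow_self]
  rw [show -Pi.single r (1:ℝ) + Pi.single r 1 = (0 : m → ℝ) by simp, upd_zero,
    Matrix.det_fromBlocks_zero₂₁]
  simp

theorem joinMat_det (M : Matrix m m ℝ) (N : Matrix n n ℝ) (r : m) (c : n) :
    (joinMat M N r c).det = M.det * (N.det + (N.updateRow c (Pi.single c 1)).det)
      + (M.updateRow r (Pi.single r 1)).det * N.det := by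
  have h1 : (joinMat M N r c) = (joinMat M N r c).updateRow (Sum.inl r)
      (Sum.elim (M r) 0 + Sum.elim (Pi.single r 1) (-Pi.single c 1)) := by
    rw [eq_comm]
    have h2 : (Sum.elim (M r) 0 + Sum.elim (Pi.single r 1) (-Pi.single c 1) : m ⊕ n → ℝ) =
        (joinMat M N r c) (Sum.inl r) := by
      ext (j | j) <;> simp [joinMat]
    rw [h2, Matrix.updateRow_eq_self]
  rw [h1, Matrix.det_updateRow_add, joinMat_upd, joinMat_upd2, Matrix.updateRow_eq_self]

end blocks

section join
variable {V₁ V₂ V : Type*} [Fintype V₁] [Fintype V₂] [Fintype V]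
  (G₁ : SimpleGraph V₁) (G₂ : SimpleGraph V₂) (G : SimpleGraph V) (e : V₁ ⊕ V₂ ≃ V)
  (r : V₁) (c : V₂)

open Classical in
theorem lapX_join (x : ℝ)
    (h1 : ∀ i j, G.Adj (e (Sum.inl i)) (e (Sum.inl j)) ↔ G₁.Adj i j)
    (h2 : ∀ i j, G.Adj (e (Sum.inr i)) (e (Sum.inr j)) ↔ G₂.Adj i j)
    (h3 : ∀ i j, G.Adj (e (Sum.inl i)) (e (Sum.inr j)) ↔ i = r ∧ j = c) :
    (lapX G x).submatrix e e = joinMat (lapX G₁ x) (lapX G₂ x) r c := by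
  have h4 : ∀ i j, G.Adj (e (Sum.inr i)) (e (Sum.inl j)) ↔ j = r ∧ i = c := by
    intro i j; rw [G.adj_comm, h3]
  have hs : ∀ i, ∑ k, (if G.Adj i k then (1:ℝ) else 0)
      = ∑ k, (if G.Adj i (e (Sum.inl k)) then (1:ℝ) else 0)
        + ∑ k, (if G.Adj i (e (Sum.inr k)) then (1:ℝ) else 0) := by
    intro i
    rw [← Fintype.sum_sum_type (fun k => if G.Adj i (e k) then (1:ℝ) else 0)]
    exact (e.sum_comp (fun k => if G.Adj i k then (1:ℝ) else 0)).symm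
  ext (i | i) (j | j)
  · by_cases hi : i = r
    · subst hi
      by_cases hj : i = j
      · subst hj
        simp [lapX, joinMat, hs, h1, h3, -Finset.sum_boole]; ring
      · simp [lapX, joinMat, hs, h1, h3, hj, Ne.symm hj]
    · simp [lapX, joinMat, hs, h1, h3, hi]
  · by_cases hi : i = r <;> by_cases hj : j = c <;> 
      simp [lapX, joinMat, h3, hi, hj, Matrix.updateRow_apply, Pi.single_apply]
  · by_cases hi : i = c <;> by_cases hj : j = r <;> 
      simp [lapX, joinMat, h4, hi, hj, Matrix.updateRow_apply, Pi.single_apply]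
  · by_cases hi : i = c
    · subst hi
      by_cases hj : i = j
      · subst hj
        simp [lapX, joinMat, hs, h2, h4, -Finset.sum_boole]; ring
      · simp [lapX, joinMat, hs, h2, h4, hj, Ne.symm hj]
    · simp [lapX, joinMat, hs, h2, h4, hi]

theorem join_formula (x : ℝ)
    (h1 : ∀ i j, G.Adj (e (Sum.inl i)) (e (Sum.inl j)) ↔ G₁.Adj i j)
    (h2 : ∀ i j, G.Adj (e (Sum.inr i)) (e (Sum.inr j)) ↔ G₂.Adj i j)
    (h3 : ∀ i j, G.Adj (e (Sum.inl i)) (e (Sum.inr j)) ↔ i = r ∧ j = c) :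
    dA G x = dA G₁ x * (dA G₂ x + dB G₂ x c) + dB G₁ x r * dA G₂ x ∧
    dB G x (e (Sum.inl r)) = dB G₁ x r * (dA G₂ x + dB G₂ x c) := by
  classical
  have key := lapX_join G₁ G₂ G e r c x h1 h2 h3
  constructor
  · have := joinMat_det (lapX G₁ x) (lapX G₂ x) r c
    have h := Matrix.det_submatrix_equiv_self e (lapX G x)
    have k2 : (lapX G x).submatrix e e = joinMat (lapX G₁ x) (lapX G₂ x) r c := by
      convert key
    rw [k2, this] at h
    unfold dA dB
    convert h.symm
  · have := joinMat_upd (lapX G₁ x) (lapX G₂ x) r c (Pi.single r 1)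
    have h := Matrix.det_submatrix_equiv_self e
      ((lapX G x).updateRow (e (Sum.inl r)) (Pi.single (e (Sum.inl r)) 1))
    have k2 : ((lapX G x).updateRow (e (Sum.inl r)) (Pi.single (e (Sum.inl r)) 1)).submatrix e e
       = (joinMat (lapX G₁ x) (lapX G₂ x) r c).updateRow (Sum.inl r)
          (Sum.elim (Pi.single r 1) 0) := by
      have k3 : (lapX G x).submatrix e e = joinMat (lapX G₁ x) (lapX G₂ x) r c := by
        convert key
      rw [← k3]
      ext i (j | j) <;> simp [Matrix.updateRow_apply, Pi.single_apply]
    rw [k2, this] at h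
    unfold dA dB
    convert h.symm

end join

theorem det_any {V : Type*} [Fintype V] [i1 : DecidableEq V] (M : Matrix V V ℝ) :
    @Matrix.det V (Classical.decEq V) _ ℝ _ M = M.det := by
  congr!

theorem det_any' {V : Type*} [Fintype V] [i1 : DecidableEq V] (M : Matrix V V ℝ) (w : V) :
    @Matrix.det V (Classical.decEq V) _ ℝ _
      (@Matrix.updateRow V V ℝ (Classical.decEq V) M w
        (@Pi.single V (fun _ => ℝ) _ (Classical.decEq V) w 1)) =
      (M.updateRow w (Pi.single w 1)).det := by
  congr!

theorem dA_subsingleton {V : Type*} [Fintype V] [Subsingleton V] (G : SimpleGraph V) (x : ℝ)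
    (w : V) : dA G x = x ∧ dB G x w = 1 := by
  classical
  haveI : Unique V := ⟨⟨w⟩, fun a => Subsingleton.elim _ _⟩
  have hA : ∀ i j, ¬ G.Adj i j := fun i j h => h.ne (Subsingleton.elim _ _)
  constructor
  · unfold dA
    rw [det_any, Matrix.det_unique]
    simp [lapX, hA]
  · unfold dB
    rw [det_any', Matrix.det_unique, Subsingleton.elim w default]
    simp

/-- The path values `(a n, q n)`. -/
def pq (x : ℝ) : ℕ → ℝ × ℝ
  | 0 => (0, 1)
  | n + 1 => ((pq x n).1 + x * ((pq x n).1 + (pq x n).2), (pq x n).1 + (pq x n).2)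

theorem pq_nonneg {x : ℝ} (hx : 0 ≤ x) (n : ℕ) : 0 ≤ (pq x n).1 ∧ 0 ≤ (pq x n).2 := by
  induction n with
  | zero => simp [pq]
  | succ n ih => 
    obtain ⟨h1, h2⟩ := ih
    simp only [pq]
    constructor <;> positivity

theorem pq_add1 (x : ℝ) (k l : ℕ) : (pq x (k + l)).1 =
    (pq x k).1 * ((pq x l).1 + (pq x l).2) + (pq x k).2 * (pq x l).1 := by
  induction k generalizing l with
  | zero => simp [pq]
  | succ k ih =>
    have := ih (l + 1)
    rw [show k + 1 + l = k + (l + 1) by ring, this]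
    simp only [pq]
    ring

theorem pq_ge (x : ℝ) (hx : 0 ≤ x) (k : ℕ) : x * (pq x (k + 1)).2 ≤ (pq x (k + 1)).1 := by
  have := (pq_nonneg hx k).1
  simp only [pq]
  linarith

theorem pq_add2 (x : ℝ) (hx : 0 ≤ x) (k l : ℕ) :
    (pq x (k + 1)).2 * ((pq x l).1 + (pq x l).2) ≤ (pq x (k + 1 + l)).2 := by
  induction l with
  | zero => simp [pq]
  | succ l ih =>
    have h1 := pq_add1 x (k + 1) l
    have h2 := pq_ge x hx k
    have h3 := pq_nonneg hx l
    have e1 : (pq x (k + 1 + (l + 1))).2 = (pq x (k + 1 + l)).1 + (pq x (k + 1 + l)).2 := rfl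
    have e2 : (pq x (l + 1)).1 = (pq x l).1 + x * ((pq x l).1 + (pq x l).2) := rfl
    have e3 : (pq x (l + 1)).2 = (pq x l).1 + (pq x l).2 := rfl
    rw [e1, h1, e2, e3]
    nlinarith [mul_le_mul_of_nonneg_right h2 (add_nonneg h3.1 h3.2)]

theorem path_val (x : ℝ) (n : ℕ) : dA (SimpleGraph.pathGraph (n + 1)) x = (pq x (n + 1)).1 ∧
    dB (SimpleGraph.pathGraph (n + 1)) x 0 = (pq x (n + 1)).2 := by
  induction n with
  | zero =>
    have := dA_subsingleton (SimpleGraph.pathGraph 1) x 0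
    rw [this.1, this.2]
    simp [pq]
  | succ n ih =>
    have h := join_formula (SimpleGraph.pathGraph 1) (SimpleGraph.pathGraph (n + 1))
      (SimpleGraph.pathGraph (n + 1 + 1))
      (finSumFinEquiv.trans (finCongr (by omega))) 0 0 x
      (by intro i j; simp [SimpleGraph.pathGraph_adj])
      (by intro i j; simp [SimpleGraph.pathGraph_adj]; try omega)
      (by intro i j; have := i.2; simp only [SimpleGraph.pathGraph_adj, Fin.ext_iff, Equiv.trans_apply, finSumFinEquiv_apply_left, finSumFinEquiv_apply_right, finCongr_apply, Fin.val_cast, Fin.val_castAdd, Fin.val_natAdd, Fin.val_zero]; omega)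
    have h1 := dA_subsingleton (SimpleGraph.pathGraph 1) x 0
    rw [h1.1, h1.2, ih.1, ih.2] at h
    refine ⟨?_, ?_⟩
    · rw [h.1]; simp only [pq]; ring
    · have e : ((finSumFinEquiv.trans (finCongr (by omega : 1 + (n + 1) = n + 1 + 1)))
        (Sum.inl 0) : Fin (n + 1 + 1)) = 0 := by
        ext; simp
      rw [← e, h.2]; simp only [pq]; ring

/-- Splitting a tree along an edge at `w`. -/
theorem tree_split {V : Type*} (G : SimpleGraph V) (hG : G.IsTree) (w c : V) (hwc : G.Adj w c) :
    ∃ S : Set V, w ∈ S ∧ c ∉ S ∧ (G.induce S).IsTree ∧ (G.induce Sᶜ).IsTree ∧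
      ∀ i ∈ S, ∀ j ∉ S, G.Adj i j ↔ i = w ∧ j = c := by
  have hb := (SimpleGraph.isAcyclic_iff_forall_adj_isBridge.1 hG.isAcyclic) hwc
  rw [SimpleGraph.isBridge_iff] at hb
  set H := G.deleteEdges {s(w, c)} with hH
  have hle : H ≤ G := SimpleGraph.deleteEdges_le _
  have hadj : ∀ i j, G.Adj i j → H.Adj i j ∨ (i = w ∧ j = c) ∨ (i = c ∧ j = w) := by
    intro i j hij
    by_cases h : s(i, j) = s(w, c)
    · right; simpa using h
    · left; rw [hH, SimpleGraph.deleteEdges_adj]; exact ⟨hij, h⟩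
  have hcov : ∀ u, H.Reachable w u ∨ H.Reachable c u := by
    intro u
    obtain ⟨p⟩ := hG.connected.preconnected u w
    induction p with
    | nil => left; rfl
    | cons h p ih =>
      rename_i a b d
      rcases hadj _ _ h with h | ⟨rfl, rfl⟩ | ⟨rfl, rfl⟩
      · have ih := ih hwc hb hH hle hadj 
        exact ih.imp (fun t => t.trans h.symm.reachable) (fun t => t.trans h.symm.reachable)
      · left; rfl
      · right; rfl
  have hcomp : ∀ u : V, (G.induce {z | H.Reachable u z}).Connected := by
    intro u
    have h1 := (H.connectedComponentMk u).connected_toSimpleGraph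
    have h2 : (H.connectedComponentMk u).supp = {z | H.Reachable u z} := by
      ext z; simp [SimpleGraph.ConnectedComponent.mem_supp_iff, SimpleGraph.reachable_comm]
    have h3 : (H.induce (H.connectedComponentMk u).supp).Connected := h1
    rw [h2] at h3
    exact h3.mono (fun a b hab => hle hab)
  have hcompl : {z | H.Reachable w z}ᶜ = {z | H.Reachable c z} := by
    ext z
    simp only [Set.mem_compl_iff, Set.mem_ofPred_eq]
    refine ⟨fun h => (hcov z).resolve_left h, fun h h' => hb (h'.trans h.symm)⟩
  refine ⟨{z | H.Reachable w z}, SimpleGraph.Reachable.refl _, hb,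
    ⟨hcomp w, hG.isAcyclic.induce _⟩, ⟨?_, hG.isAcyclic.induce _⟩, ?_⟩
  · rw [hcompl]; exact hcomp c
  · intro i hi j hj
    refine ⟨fun h => ?_, fun ⟨h, h'⟩ => h ▸ h' ▸ hwc⟩
    rcases hadj _ _ h with h | h | h
    · exact absurd (SimpleGraph.Reachable.trans hi h.reachable) hj
    · exact h
    · exact absurd (h.1 ▸ hi) hb

theorem tree_bound (x : ℝ) (hx : 0 ≤ x) (n : ℕ) : ∀ (V : Type) [Fintype V] (G : SimpleGraph V),
    G.IsTree → Fintype.card V = n → ∀ w, 0 ≤ dA G x ∧ 0 ≤ dB G x w ∧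
      dA G x ≤ (pq x n).1 ∧ dB G x w ≤ (pq x n).2 := by
  induction n using Nat.strong_induction_on with
  | _ n ih =>
  intro V _ G hG hn w
  classical
  by_cases hs : Subsingleton V
  · have h := dA_subsingleton G x w
    have : n = 1 := by
      rw [← hn]; exact Fintype.card_eq_one_iff.2 ⟨w, fun y => Subsingleton.elim _ _⟩
    subst this
    rw [h.1, h.2]
    simp [pq, hx]
  · have : Nontrivial V := not_subsingleton_iff_nontrivial.1 hs
    obtain ⟨c, hwc⟩ := hG.connected.preconnected.exists_adj_of_nontrivial w
    obtain ⟨S, hw, hc, t1, t2, hS⟩ := tree_split G hG w c hwc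
    have hcard : Fintype.card S + Fintype.card (Sᶜ : Set V) = n := by
      rw [← hn, ← Fintype.card_sum]; exact Fintype.card_congr (Equiv.Set.sumCompl S)
    have p1 : 0 < Fintype.card S := Fintype.card_pos_iff.2 ⟨⟨w, hw⟩⟩
    have p2 : 0 < Fintype.card (Sᶜ : Set V) := Fintype.card_pos_iff.2 ⟨⟨c, hc⟩⟩
    obtain ⟨a1, a2, a3, a4⟩ := ih _ (by omega) S (G.induce S) t1 rfl ⟨w, hw⟩
    obtain ⟨b1, b2, b3, b4⟩ := ih _ (by omega) (Sᶜ : Set V) (G.induce Sᶜ) t2 rfl ⟨c, hc⟩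
    have h := join_formula (G.induce S) (G.induce Sᶜ) G (Equiv.Set.sumCompl S) ⟨w, hw⟩ ⟨c, hc⟩ x
      (by intro i j; simp) (by intro i j; simp)
      (by intro i j; simpa [Subtype.ext_iff] using hS i i.2 j j.2)
    have ew : (Equiv.Set.sumCompl S) (Sum.inl ⟨w, hw⟩) = w := by simp
    rw [ew] at h
    rw [h.1, h.2]
    obtain ⟨k, hk⟩ : ∃ k, Fintype.card S = k + 1 := ⟨_, (Nat.succ_pred_eq_of_pos p1).symm⟩
    have q1 := pq_add1 x (Fintype.card S) (Fintype.card (Sᶜ : Set V))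
    have q2 := pq_add2 x hx k (Fintype.card (Sᶜ : Set V))
    rw [← hk] at q2
    rw [hcard] at q1 q2
    have n1 := pq_nonneg hx (Fintype.card S)
    refine ⟨by positivity, by positivity, ?_, ?_⟩
    · rw [q1]
      have := n1.1
      have := n1.2
      gcongr
    · refine le_trans ?_ q2
      have := n1.2
      gcongr

end TreeDet

theorem stmt_7 (v : ℕ) (hv : 2 ≤ v) (T : SimpleGraph (Fin v)) [DecidableRel T.Adj]
    (hT : T.IsTree) :
    ∀ y : ℝ, 0 ≤ y →
      Matrix.det (T.lapMatrix ℝ + ((v : ℝ) * y) • (1 : Matrix (Fin v) (Fin v) ℝ)) ≤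
      Matrix.det ((SimpleGraph.pathGraph v).lapMatrix ℝ +
        ((v : ℝ) * y) • (1 : Matrix (Fin v) (Fin v) ℝ)) := by
  intro y hy
  obtain ⟨n, rfl⟩ : ∃ n, v = n + 1 := ⟨v - 1, by omega⟩
  have hx : 0 ≤ ((n + 1 : ℕ) : ℝ) * y := by positivity
  rw [lapX_eq, lapX_eq]
  have h1 := (path_val (((n + 1 : ℕ) : ℝ) * y) n).1
  have h2 := (tree_bound _ hx (n + 1) (Fin (n + 1)) T hT (by simp) 0).2.2.1
  rw [← h1] at h2
  unfold dA at h2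
  rw [det_any, det_any] at h2
  exact h2
end

section
/- Let v ≥ 2 and let T be a simple graph on v vertices that is a tree (connected with no cycles; equivalently connected with v−1 edges). Then for every real y ≥ 1, trace( (L(P_v) + vy·I)^{−1} ) ≤ trace( (L(T) + vy·I)^{−1} ), where P_v is the path graph on v vertices and L(·) denotes the Laplacian matrix (both matrices are positive definite, hence invertible, for y > 0). -/
theorem tree_deg_two_iso (v : ℕ) (hv : 2 ≤ v) (T : SimpleGraph (Fin v)) [DecidableRel T.Adj]
    (hT : T.IsTree) (hd : ∀ i, T.degree i ≤ 2) :
    ∃ σ : Fin v ≃ Fin v, ∀ i j, T.Adj (σ i) (σ j) ↔ (SimpleGraph.pathGraph v).Adj i j := by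
  classical
  have : Nonempty (Fin v) := ⟨⟨0, by omega⟩⟩
  obtain ⟨u, w, p, hp, hmax⟩ := SimpleGraph.Walk.exists_isPath_forall_isPath_length_le_length T
  have hall : ∀ x, x ∈ p.support := by
    by_contra hcon
    push Not at hcon
    obtain ⟨x, hx⟩ := hcon
    obtain ⟨q⟩ := hT.connected.preconnected u x
    obtain ⟨d, -, h1, h2⟩ := q.exists_boundary_dart {y | y ∈ p.support} (by simp) hx
    have hadj := d.adj
    generalize d.fst = a at *
    generalize d.snd = b at *
    simp only [Set.mem_ofPred_eq] at h1 h2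
    obtain ⟨i, hi, hil⟩ := SimpleGraph.Walk.mem_support_iff_exists_getVert.1 h1
    by_cases h0 : i = 0
    · subst h0
      simp only [SimpleGraph.Walk.getVert_zero] at hi
      subst hi
      have := hmax _ _ (SimpleGraph.Walk.cons hadj.symm p) (hp.cons h2)
      simp at this
    by_cases hl : i = p.length
    · subst hl
      simp only [SimpleGraph.Walk.getVert_length] at hi
      subst hi
      have := hmax _ _ (p.concat hadj) (hp.concat h2 hadj)
      simp at this
    have e1 : T.Adj a (p.getVert (i+1)) := by
      rw [← hi]; exact p.adj_getVert_succ (by omega)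
    have e2 : T.Adj a (p.getVert (i-1)) := by
      rw [← hi]
      have := p.adj_getVert_succ (i := i-1) (by omega)
      rw [Nat.sub_add_cancel (by omega)] at this
      exact this.symm
    have hne : p.getVert (i+1) ≠ p.getVert (i-1) := by
      intro h
      have := hp.getVert_injOn (show i+1 ≤ p.length by omega) (show i-1 ≤ p.length by omega) h
      omega
    have hb1 : b ≠ p.getVert (i+1) := fun h => h2 (h ▸ p.getVert_mem_support _)
    have hb2 : b ≠ p.getVert (i-1) := fun h => h2 (h ▸ p.getVert_mem_support _)
    have hsub : ({b, p.getVert (i+1), p.getVert (i-1)} : Finset (Fin v)) ⊆ T.neighborFinset a := by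
      intro y hy
      simp only [Finset.mem_insert, Finset.mem_singleton] at hy
      rw [SimpleGraph.mem_neighborFinset]
      rcases hy with rfl | rfl | rfl <;> assumption
    have hc := Finset.card_le_card hsub
    rw [Finset.card_eq_three.2 ⟨_, _, _, hb1, hb2, hne, rfl⟩, SimpleGraph.card_neighborFinset_eq_degree] at hc
    have := hd a
    omega
  have hlen : p.length < v := by simpa using hp.length_lt
  have hlen2 : v ≤ p.length + 1 := by
    rw [← SimpleGraph.Walk.length_support]
    have h1 : (Finset.univ : Finset (Fin v)) ⊆ p.support.toFinset := fun x _ => by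
      simpa using hall x
    have := (Finset.card_le_card h1).trans (List.toFinset_card_le _)
    simpa using this
  let f : Fin v → Fin v := fun i => p.getVert i
  have hf : Function.Injective f := by
    intro i j h
    have := hp.getVert_injOn (show (i:ℕ) ≤ p.length by omega) (show (j:ℕ) ≤ p.length by omega) h
    exact Fin.ext this
  let σ : Fin v ≃ Fin v := Equiv.ofBijective f (Finite.injective_iff_bijective.1 hf)
  have hσ : ∀ i, σ i = p.getVert i := fun i => rfl
  have hadj : ∀ i j, (SimpleGraph.pathGraph v).Adj i j → T.Adj (σ i) (σ j) := by
    intro i j h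
    rw [SimpleGraph.pathGraph_adj] at h
    rw [hσ, hσ]
    rcases h with h | h
    · rw [← h]; exact p.adj_getVert_succ (by omega)
    · rw [← h]; exact (p.adj_getVert_succ (by omega)).symm
  let H := (SimpleGraph.pathGraph v).comap σ.symm
  have hle : H ≤ T := by
    intro a b h
    have := hadj _ _ (show (SimpleGraph.pathGraph v).Adj (σ.symm a) (σ.symm b) from h)
    simpa using this
  have hpc : (SimpleGraph.pathGraph v).Connected := ⟨SimpleGraph.pathGraph_preconnected v⟩
  have hH : H.Connected := by
    let φ : SimpleGraph.pathGraph v →g H := ⟨σ, by intro a b h; simpa [H] using h⟩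
    exact SimpleGraph.Connected.map φ σ.surjective hpc
  have hTH := (SimpleGraph.isTree_iff_minimal_connected.1 hT).2 hH hle
  refine ⟨σ, fun i j => ⟨fun h => ?_, hadj i j⟩⟩
  have := hTH h
  simpa [H] using this

section aux
open Matrix

theorem inv_trace_expand {n : ℕ} (L : Matrix (Fin n) (Fin n) ℝ) (hL : L.PosSemidef) (z : ℝ)
    (hz : 0 < z) :
    ∃ r : ℝ, 0 ≤ r ∧ z * r ≤ trace ((L - 2) ^ 4) ∧
      (z + 2) ^ 4 * trace ((L + z • (1 : Matrix (Fin n) (Fin n) ℝ))⁻¹) =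
      (z + 2) ^ 3 * n - (z + 2) ^ 2 * trace (L - 2) + (z + 2) * trace ((L - 2) ^ 2)
        - trace ((L - 2) ^ 3) + r := by
  set N := L + z • (1 : Matrix (Fin n) (Fin n) ℝ) with hN
  have hpd : N.PosDef := PosDef.posSemidef_add hL (PosDef.one.smul hz)
  have hXpd := hpd.inv
  have hu : IsUnit N.det := (Matrix.isUnit_iff_isUnit_det _).1 hpd.isUnit
  have hNX : N * N⁻¹ = 1 := Matrix.mul_nonsing_inv _ hu
  have hXN : N⁻¹ * N = 1 := Matrix.nonsing_inv_mul _ hu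
  set X := N⁻¹ with hX
  set M := L - 2 with hM
  have hNM : N = M + (z + 2) • 1 := by
    rw [hN, hM, add_smul]
    have : (2 : ℝ) • (1 : Matrix (Fin n) (Fin n) ℝ) = 2 := by
      rw [two_smul, one_add_one_eq_two]
    rw [this]; abel
  have hMh : Mᴴ = M := by
    rw [hM, conjTranspose_sub, hL.isHermitian.eq]
    congr 1
    simp
  have hM2h : (M ^ 2)ᴴ = M ^ 2 := by rw [conjTranspose_pow, hMh]
  have step : ∀ k : ℕ, (z + 2) * trace (M ^ k * X) = trace (M ^ k) - trace (M ^ (k + 1) * X) := by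
    intro k
    have h : M ^ k * (N * X) = M ^ (k + 1) * X + (z + 2) • (M ^ k * X) := by
      rw [hNM, add_mul, mul_add, pow_succ, mul_assoc]; simp
    rw [hNX, mul_one] at h
    have := congrArg trace h
    rw [trace_add, trace_smul, smul_eq_mul] at this
    linarith
  have hLX : (L * X).PosSemidef := by
    have e : L * X = Xᴴ * (L ^ 2 + z • L) * X := by
      rw [hXpd.isHermitian.eq]
      have : L ^ 2 + z • L = N * L := by rw [hN, add_mul, sq]; simp
      rw [this, ← mul_assoc, hXN, one_mul]
    rw [e]
    exact ((hL.pow 2).add (hL.smul hz.le)).conjTranspose_mul_mul_same X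
  refine ⟨trace (M ^ 4 * X), ?_, ?_, ?_⟩
  · have h := (hXpd.posSemidef.conjTranspose_mul_mul_same (M ^ 2)).trace_nonneg
    rw [hM2h, Matrix.trace_mul_comm, ← mul_assoc, ← pow_add] at h
    exact h
  · have h := (hLX.conjTranspose_mul_mul_same (M ^ 2)).trace_nonneg
    rw [hM2h, Matrix.trace_mul_comm, ← mul_assoc, ← pow_add] at h
    have h2 : M ^ 4 * (N * X) = M ^ 4 * (L * X) + z • (M ^ 4 * X) := by
      rw [hN, add_mul, mul_add]; simp
    rw [hNX, mul_one] at h2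
    have := congrArg trace h2
    rw [trace_add, trace_smul, smul_eq_mul] at this
    simp only [Nat.reduceAdd] at h
    linarith
  · have s0 := step 0
    have s1 := step 1
    have s2 := step 2
    have s3 := step 3
    simp only [pow_zero, one_mul, zero_add, trace_one, Fintype.card_fin, pow_one,
      Nat.reduceAdd] at s0 s1 s2 s3
    linear_combination (z+2)^3 * s0 - (z+2)^2 * s1 + (z+2) * s2 - s3

/-- traces of powers of diagonal minus adjacency. -/
theorem trace_pows {n : ℕ} (G : SimpleGraph (Fin n)) [DecidableRel G.Adj] :
    trace (G.lapMatrix ℝ - 2) = ∑ i, ((G.degree i : ℝ) - 2) ∧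
    trace ((G.lapMatrix ℝ - 2) ^ 2) = ∑ i, (((G.degree i : ℝ) - 2) ^ 2 + G.degree i) ∧
    trace ((G.lapMatrix ℝ - 2) ^ 3) = ∑ i, (((G.degree i : ℝ) - 2) ^ 3
      + 3 * ((G.degree i : ℝ) - 2) * G.degree i) - trace ((G.adjMatrix ℝ) ^ 3) := by
  set A := G.adjMatrix ℝ with hA
  set E : Matrix (Fin n) (Fin n) ℝ := diagonal (fun i => (G.degree i : ℝ) - 2) with hE
  have hM : G.lapMatrix ℝ - 2 = E - A := by
    rw [SimpleGraph.lapMatrix, SimpleGraph.degMatrix, hE, ← diagonal_sub]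
    have : (diagonal (fun _ => (2:ℝ)) : Matrix (Fin n) (Fin n) ℝ) = 2 := by
      ext i j; simp [diagonal_apply, Matrix.ofNat_apply]
    rw [this]; abel
  have hAd : ∀ i, A i i = 0 := by intro i; simp [hA]
  have hA2 : ∀ i, (A * A) i i = G.degree i := by
    intro i; rw [hA, SimpleGraph.adjMatrix_mul_self_apply_self]
  have tA : trace A = 0 := by simp [trace, hAd]
  have tDA : ∀ d : Fin n → ℝ, trace (diagonal d * A) = 0 := by
    intro d; simp [trace, hAd, diagonal_mul]
  have tDAA : ∀ d : Fin n → ℝ, trace (diagonal d * (A * A)) = ∑ i, d i * G.degree i := by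
    intro d; simp only [trace, diag_apply, diagonal_mul, hA2]
  have tAA : trace (A * A) = ∑ i, (G.degree i : ℝ) := by
    simp only [trace, diag_apply, hA2]
  rw [hM]
  refine ⟨?_, ?_, ?_⟩
  · rw [trace_sub, tA, hE, trace_diagonal, sub_zero]
  · have : (E - A)^2 = E * E - E * A - A * E + A * A := by noncomm_ring
    rw [this, trace_add, trace_sub, trace_sub, trace_mul_comm A E, tAA, hE, tDA,
      diagonal_mul_diagonal, trace_diagonal, Finset.sum_add_distrib]
    simp only [sq]; ring
  · have : (E - A)^3 = E * E * E - (E * E) * A - E * A * E - A * (E * E) + E * (A * A) + A * E * A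
      + A * A * E - A ^ 3 := by noncomm_ring
    rw [this]
    simp only [trace_add, trace_sub]
    have c1 : trace (E * A * E) = trace (E * E * A) := by
      rw [trace_mul_comm, ← mul_assoc]
    have c2 : trace (A * (E * E)) = trace (E * E * A) := trace_mul_comm _ _
    have c3 : trace (A * E * A) = trace (E * (A * A)) := by
      rw [trace_mul_comm, ← mul_assoc, trace_mul_comm]
    have c4 : trace (A * A * E) = trace (E * (A * A)) := trace_mul_comm _ _
    rw [c1, c2, c3, c4, hE, diagonal_mul_diagonal, tDA, tDAA, diagonal_mul_diagonal,
      trace_diagonal]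
    have : ∀ i, ((G.degree i : ℝ) - 2) ^ 3 + 3 * ((G.degree i : ℝ) - 2) * G.degree i =
      ((G.degree i : ℝ) - 2) * ((G.degree i : ℝ) - 2) * ((G.degree i : ℝ) - 2) + 3 * (((G.degree i : ℝ) - 2) * G.degree i) := by intro i; ring
    simp only [this, Finset.sum_add_distrib, ← Finset.mul_sum]
    ring

def Rs {v : ℕ} (i : Fin v) : Fin v := ⟨min (i.1 + 1) (v - 1), by have := i.2; omega⟩
def Ls {v : ℕ} (i : Fin v) : Fin v := ⟨i.1 - 1, by have := i.2; omega⟩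

def Smat (v : ℕ) : Matrix (Fin v) (Fin v) ℝ :=
  fun i j => (if Rs i = j then 1 else 0) + (if Ls i = j then 1 else 0)

theorem Smat_mul {v : ℕ} (X : Matrix (Fin v) (Fin v) ℝ) (i j : Fin v) :
    (Smat v * X) i j = X (Rs i) j + X (Ls i) j := by
  simp [Matrix.mul_apply, Smat, add_mul, Finset.sum_add_distrib]

theorem path_adj {v : ℕ} (hv : 2 ≤ v) [DecidableRel (SimpleGraph.pathGraph v).Adj] (i j : Fin v) :
    (SimpleGraph.pathGraph v).adjMatrix ℝ i j = Smat v i j -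
      (if i = j then ((if Rs i = i then 1 else 0) + (if Ls i = i then 1 else 0)) else 0) := by
  rw [SimpleGraph.adjMatrix_apply]
  simp only [SimpleGraph.pathGraph_adj, Smat, Rs, Ls, Fin.ext_iff]
  have := i.2
  have := j.2
  split_ifs <;> first | omega | norm_num

theorem path_deg {v : ℕ} (hv : 2 ≤ v) [DecidableRel (SimpleGraph.pathGraph v).Adj] (i : Fin v) :
    ((SimpleGraph.pathGraph v).degree i : ℝ) = 2 - (if Rs i = i then 1 else 0)
      - (if Ls i = i then 1 else 0) := by
  have h : ((SimpleGraph.pathGraph v).degree i : ℝ)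
      = ∑ j, (SimpleGraph.pathGraph v).adjMatrix ℝ i j := by
    simp [SimpleGraph.adjMatrix_apply, ← SimpleGraph.card_neighborFinset_eq_degree,
      SimpleGraph.neighborFinset_eq_filter]
  rw [h]
  simp only [path_adj hv, Smat, Finset.sum_sub_distrib, Finset.sum_add_distrib,
    Finset.sum_ite_eq, Finset.mem_univ, if_true]
  ring

theorem path_M {v : ℕ} (hv : 2 ≤ v) [DecidableRel (SimpleGraph.pathGraph v).Adj] :
    (SimpleGraph.pathGraph v).lapMatrix ℝ - 2 = - Smat v := by
  ext i j
  rw [SimpleGraph.lapMatrix, SimpleGraph.degMatrix, Matrix.sub_apply, Matrix.sub_apply, path_adj hv,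
    Matrix.diagonal_apply, path_deg hv, Matrix.neg_apply, Matrix.ofNat_apply]
  by_cases h : i = j
  · simp [h]; ring
  · simp [h]

theorem path_tr4 {v : ℕ} (hv : 4 ≤ v) [DecidableRel (SimpleGraph.pathGraph v).Adj] :
    trace (((SimpleGraph.pathGraph v).lapMatrix ℝ - 2) ^ 4) ≤ 6 * (v : ℝ) := by
  rw [path_M (by omega)]
  have e : (-Smat v) ^ 4 = Smat v * (Smat v * (Smat v * Smat v)) := by noncomm_ring
  rw [e, trace]
  have : ∀ i ∈ Finset.univ, (Smat v * (Smat v * (Smat v * Smat v))).diag i ≤ 6 := by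
    intro i _
    rw [diag_apply]
    simp only [Smat_mul]
    have hi := i.2
    simp only [Smat, Rs, Ls, Fin.ext_iff]
    rcases (by omega : i.1 = 0 ∨ i.1 = 1 ∨ i.1 = v - 2 ∨ i.1 = v - 1 ∨ (2 ≤ i.1 ∧ i.1 + 3 ≤ v))
      with h | h | h | h | h
    all_goals (simp (disch := omega) only [if_pos, if_neg]; norm_num)
  refine (Finset.sum_le_sum this).trans ?_
  simp [mul_comm]

theorem path_A3 {v : ℕ} [DecidableRel (SimpleGraph.pathGraph v).Adj] :
    trace (((SimpleGraph.pathGraph v).adjMatrix ℝ) ^ 3) = 0 := by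
  rw [pow_succ, sq, trace]
  refine Finset.sum_eq_zero fun i _ => ?_
  rw [diag_apply, Matrix.mul_apply]
  refine Finset.sum_eq_zero fun j _ => ?_
  rw [Matrix.mul_apply, Finset.sum_mul]
  refine Finset.sum_eq_zero fun k _ => ?_
  simp only [SimpleGraph.adjMatrix_apply, SimpleGraph.pathGraph_adj]
  split_ifs <;> first | omega | simp

theorem path_sum {v : ℕ} (hv : 2 ≤ v) [DecidableRel (SimpleGraph.pathGraph v).Adj] :
    ∑ i, (((SimpleGraph.pathGraph v).degree i : ℝ) - 2) = -2 := by
  have h1 : ∀ i : Fin v, Rs i = i ↔ i = ⟨v-1, by omega⟩ := by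
    intro i; have := i.2; simp only [Rs, Fin.ext_iff]; omega
  have h2 : ∀ i : Fin v, Ls i = i ↔ i = ⟨0, by omega⟩ := by
    intro i; have := i.2; simp only [Ls, Fin.ext_iff]; omega
  simp only [path_deg hv, h1, h2, Finset.sum_sub_distrib, Finset.sum_ite_eq', Finset.mem_univ, if_true]
  ring

theorem path_deg01 {v : ℕ} (hv : 2 ≤ v) [DecidableRel (SimpleGraph.pathGraph v).Adj] (i : Fin v) :
    ((SimpleGraph.pathGraph v).degree i : ℝ) - 2 = 0 ∨ ((SimpleGraph.pathGraph v).degree i : ℝ) - 2 = -1 := by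
  rw [path_deg hv]
  have := i.2
  simp only [Rs, Ls, Fin.ext_iff]
  split_ifs <;> first | omega | norm_num

end aux

theorem stmt_8 (v : ℕ) (hv : 2 ≤ v) (T : SimpleGraph (Fin v)) [DecidableRel T.Adj]
    (hT : T.IsTree) :
    ∀ y : ℝ, 1 ≤ y →
      Matrix.trace (((SimpleGraph.pathGraph v).lapMatrix ℝ +
        ((v : ℝ) * y) • (1 : Matrix (Fin v) (Fin v) ℝ))⁻¹) ≤
      Matrix.trace ((T.lapMatrix ℝ +
        ((v : ℝ) * y) • (1 : Matrix (Fin v) (Fin v) ℝ))⁻¹) := by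
  intro y hy
  have hv0 : (2 : ℝ) ≤ v := by exact_mod_cast hv
  have hz : (v : ℝ) ≤ v * y := by nlinarith
  generalize (v : ℝ) * y = z at hz
  by_cases hd : ∀ i, T.degree i ≤ 2
  · obtain ⟨σ, hσ⟩ := tree_deg_two_iso v hv T hT hd
    have hA : ∀ i j, T.adjMatrix ℝ (σ i) (σ j) = (SimpleGraph.pathGraph v).adjMatrix ℝ i j := by
      intro i j
      simp only [SimpleGraph.adjMatrix_apply, hσ]
    have hdeg : ∀ i, (T.degree (σ i) : ℝ) = (SimpleGraph.pathGraph v).degree i := by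
      intro i
      have h : ∀ (G : SimpleGraph (Fin v)) [DecidableRel G.Adj] (i : Fin v), (G.degree i : ℝ)
          = ∑ j, G.adjMatrix ℝ i j := by
        intro G _ i
        simp [SimpleGraph.adjMatrix_apply, ← SimpleGraph.card_neighborFinset_eq_degree,
          SimpleGraph.neighborFinset_eq_filter]
      rw [h, h, ← Equiv.sum_comp σ]
      simp only [hA]
    have hE : (SimpleGraph.pathGraph v).lapMatrix ℝ + z • (1 : Matrix (Fin v) (Fin v) ℝ)
        = (T.lapMatrix ℝ + z • (1 : Matrix (Fin v) (Fin v) ℝ)).submatrix σ σ := by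
      ext i j
      simp only [SimpleGraph.lapMatrix, SimpleGraph.degMatrix, Matrix.submatrix_apply,
        Matrix.add_apply, Matrix.sub_apply, Matrix.smul_apply, Matrix.diagonal_apply,
        Matrix.one_apply, hA, hdeg, σ.injective.eq_iff]
    rw [hE, Matrix.inv_submatrix_equiv]
    simp only [Matrix.trace, Matrix.diag_apply, Matrix.submatrix_apply]
    exact (Equiv.sum_comp σ (fun i => (T.lapMatrix ℝ + z • (1 : Matrix (Fin v) (Fin v) ℝ))⁻¹ i i)).le
  push Not at hd
  obtain ⟨k, hk⟩ := hd
  have hlt : ∀ i, T.degree i + 1 ≤ v := fun i => by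
    have := T.degree_lt_card_verts i
    simp at this; omega
  have hv4 : 4 ≤ v := by have := hlt k; omega
  have hv4' : (4 : ℝ) ≤ v := by exact_mod_cast hv4
  have hz0 : 0 < z := by linarith
  obtain ⟨r, hr0, -, hr⟩ := inv_trace_expand _ (T.posSemidef_lapMatrix ℝ) z hz0
  obtain ⟨s, -, hs1, hs⟩ := inv_trace_expand _ ((SimpleGraph.pathGraph v).posSemidef_lapMatrix ℝ) z hz0
  have hs6 : s ≤ 6 := by
    have h4 := path_tr4 hv4
    have : z * s ≤ z * 6 := by linarith
    exact le_of_mul_le_mul_left this hz0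
  obtain ⟨t1, t2, t3⟩ := trace_pows T
  obtain ⟨p1, p2, p3⟩ := trace_pows (SimpleGraph.pathGraph v)
  rw [path_A3, sub_zero] at p3
  have hpsum := path_sum (v := v) hv
  have htsum : ∑ i, ((T.degree i : ℝ) - 2) = -2 := by
    have h1 := T.sum_degrees_eq_twice_card_edges
    have h2 := hT.card_edgeFinset
    simp only [Fintype.card_fin] at h2
    have h3 : ∑ i, T.degree i + 2 = 2 * v := by omega
    have h4 : ∑ i, (T.degree i : ℝ) + 2 = 2 * v := by exact_mod_cast h3
    rw [Finset.sum_sub_distrib]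
    simp
    linarith
  have hA3 : 0 ≤ Matrix.trace ((T.adjMatrix ℝ) ^ 3) := by
    have hnn : ∀ i j, 0 ≤ T.adjMatrix ℝ i j := by
      intro i j; rw [SimpleGraph.adjMatrix_apply]; split_ifs <;> norm_num
    rw [pow_succ, sq, Matrix.trace]
    refine Finset.sum_nonneg fun i _ => ?_
    rw [Matrix.diag_apply, Matrix.mul_apply]
    refine Finset.sum_nonneg fun j _ => mul_nonneg ?_ (hnn _ _)
    rw [Matrix.mul_apply]
    exact Finset.sum_nonneg fun l _ => mul_nonneg (hnn _ _) (hnn _ _)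
  -- the combined quantity
  have key : ∀ (G : SimpleGraph (Fin v)) [DecidableRel G.Adj],
      ∑ i, ((G.degree i : ℝ) - 2) = -2 →
      (z + 2) * ∑ i, (((G.degree i : ℝ) - 2) ^ 2 + G.degree i)
        - ∑ i, (((G.degree i : ℝ) - 2) ^ 3 + 3 * ((G.degree i : ℝ) - 2) * G.degree i)
      = 2 * (z + 2) * v + 8 + ∑ i, ((G.degree i : ℝ) - 2) * ((G.degree i : ℝ) - 1)
          * (z - ((G.degree i : ℝ) - 2)) := by
    intro G _ hG
    have e : 2 * (z + 2) * v + 8 = ∑ i, (2 * (z + 2) - 4 * ((G.degree i : ℝ) - 2)) := by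
      rw [Finset.sum_sub_distrib, ← Finset.mul_sum (f := fun i => (G.degree i : ℝ) - 2), hG]
      simp; ring
    rw [e, Finset.mul_sum, ← Finset.sum_sub_distrib, ← Finset.sum_add_distrib]
    refine Finset.sum_congr rfl fun i _ => ?_
    ring
  have kT := key T htsum
  have kP := key (SimpleGraph.pathGraph v) hpsum
  have zP : ∑ i, (((SimpleGraph.pathGraph v).degree i : ℝ) - 2) *
      (((SimpleGraph.pathGraph v).degree i : ℝ) - 1)
          * (z - (((SimpleGraph.pathGraph v).degree i : ℝ) - 2)) = 0 := by
    refine Finset.sum_eq_zero fun i _ => ?_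
    rcases path_deg01 hv i with h | h
    · rw [h]; ring
    · have : ((SimpleGraph.pathGraph v).degree i : ℝ) - 1 = 0 := by linarith
      rw [this]; ring
  have zT : 6 ≤ ∑ i, ((T.degree i : ℝ) - 2) * ((T.degree i : ℝ) - 1)
          * (z - ((T.degree i : ℝ) - 2)) := by
    have hz3 : ∀ i, 3 ≤ z - ((T.degree i : ℝ) - 2) := by
      intro i
      have : (T.degree i : ℝ) + 1 ≤ v := by exact_mod_cast hlt i
      linarith
    have hnn : ∀ i ∈ Finset.univ, 0 ≤ ((T.degree i : ℝ) - 2) * ((T.degree i : ℝ) - 1)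
          * (z - ((T.degree i : ℝ) - 2)) := by
      intro i _
      refine mul_nonneg ?_ (by linarith [hz3 i])
      rcases Nat.lt_or_ge (T.degree i) 2 with h | h
      · have : (T.degree i : ℝ) ≤ 1 := by exact_mod_cast (by omega : T.degree i ≤ 1)
        exact mul_nonneg_of_nonpos_of_nonpos (by linarith) (by linarith)
      · have : (2 : ℝ) ≤ T.degree i := by exact_mod_cast h
        exact mul_nonneg (by linarith) (by linarith)
    refine le_trans ?_ (Finset.single_le_sum hnn (Finset.mem_univ k))
    have h3 : (3 : ℝ) ≤ T.degree k := by exact_mod_cast hk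
    have h2 : 2 ≤ ((T.degree k : ℝ) - 2) * ((T.degree k : ℝ) - 1) := by
      clear * - h3
      nlinarith
    have h6 := mul_le_mul h2 (hz3 k) (by norm_num) (by linarith)
    linarith only [h6]
  have hw : 0 < (z + 2) ^ 4 := by positivity
  refine le_of_mul_le_mul_left ?_ hw
  rw [hr, hs, t1, t2, t3, p1, p2, p3, htsum, hpsum]
  linarith only [kT, kP, zP, zT, hA3, hs6, hr0]
end

section
/- Let v ≥ 3 and let G be a connected simple graph on v vertices with exactly v edges. Then for every real y ≥ 0, det( L(G) + vy·I ) ≤ det( L(C_v) + vy·I ), where C_v is the cycle graph on v vertices and L(·) denotes the Laplacian matrix. -/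
namespace DOpt

open Matrix

/-- Real-valued adjacency indicator. -/
noncomputable def aa {V : Type} (G : SimpleGraph V) (i j : V) : ℝ :=
  open Classical in if G.Adj i j then 1 else 0

/-- Shifted Laplacian of a weight function. -/
def LL {V : Type} [Fintype V] [DecidableEq V] (a : V → V → ℝ) (x : ℝ) : Matrix V V ℝ :=
  fun i j => (if i = j then x + ∑ k, a i k else 0) - a i j

/-- Oriented edge vector. -/
def bb {V : Type} [DecidableEq V] (u w : V) : V → ℝ := Pi.single u 1 - Pi.single w 1

/-- Edge indicator. -/
def EE {V : Type} [DecidableEq V] (u w : V) (i j : V) : ℝ :=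
  (if i = u ∧ j = w then 1 else 0) + (if i = w ∧ j = u then 1 else 0)

/-- The pair of path polynomials. -/
def qr (x : ℝ) : ℕ → ℝ × ℝ
  | 0 => (0, 1)
  | n + 1 => ((qr x n).1 + x * ((qr x n).1 + (qr x n).2), (qr x n).1 + (qr x n).2)

def q (x : ℝ) (n : ℕ) : ℝ := (qr x n).1
def r (x : ℝ) (n : ℕ) : ℝ := (qr x n).2

lemma q_zero (x : ℝ) : q x 0 = 0 := rfl
lemma r_zero (x : ℝ) : r x 0 = 1 := rfl
lemma q_succ (x : ℝ) (n : ℕ) : q x (n + 1) = q x n + x * (q x n + r x n) := rfl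
lemma r_succ (x : ℝ) (n : ℕ) : r x (n + 1) = q x n + r x n := rfl

lemma qr_nonneg {x : ℝ} (hx : 0 ≤ x) (n : ℕ) : 0 ≤ q x n ∧ 0 ≤ r x n := by
  induction n with
  | zero => simp [q_zero, r_zero]
  | succ n ih =>
    obtain ⟨h1, h2⟩ := ih
    rw [q_succ, r_succ]
    constructor <;> positivity

lemma qr_add (x : ℝ) (a b : ℕ) :
    q x (a + b) = q x a * q x b + r x a * q x b + q x a * r x b ∧
    x * r x (a + b + 1) = x * (r x (a + 1) * r x (b + 1)) + q x a * q x b := by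
  induction a with
  | zero => simp [q_zero, r_zero, r_succ]
  | succ a ih =>
    obtain ⟨h1, h2⟩ := ih
    have e1 : q x (a + 1 + b) =
        q x (a + 1) * q x b + r x (a + 1) * q x b + q x (a + 1) * r x b := by
      rw [show a + 1 + b = a + b + 1 by ring, q_succ, ← r_succ, mul_comm x, mul_comm _ x, h2, h1]
      simp only [q_succ, r_succ]; ring
    refine ⟨e1, ?_⟩
    rw [r_succ x (a + 1 + b), mul_add, e1, show a + 1 + b = a + b + 1 by ring, h2]
    simp only [q_succ, r_succ]; ring

lemma r_mul_le {x : ℝ} (hx : 0 < x) (a b : ℕ) : r x (a + 1) * r x (b + 1) ≤ r x (a + b + 1) := by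
  have h := (qr_add x a b).2
  have := mul_nonneg (qr_nonneg hx.le a).1 (qr_nonneg hx.le b).1
  exact le_of_mul_le_mul_left (by linarith) hx

set_option linter.unusedSimpArgs false

section
variable {V : Type} [Fintype V] [DecidableEq V]

lemma LL_mulVec (a : V → V → ℝ) (x : ℝ) (g : V → ℝ) (i : V) :
    (LL a x *ᵥ g) i = x * g i + ∑ k, a i k * (g i - g k) := by
  simp only [mulVec, dotProduct, LL, sub_mul, ite_mul, zero_mul, Finset.sum_sub_distrib,
    Finset.sum_ite_eq, Finset.mem_univ, if_true, mul_sub, add_mul, Finset.sum_mul]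
  ring

lemma LL_add_edge (a0 : V → V → ℝ) (x : ℝ) {u w : V} (h : u ≠ w) :
    LL (fun i j => a0 i j + EE u w i j) x = LL a0 x + vecMulVec (bb u w) (bb u w) := by
  ext i j
  have hs : ∑ k, EE u w i k = (if i = u then 1 else 0) + (if i = w then 1 else 0) := by
    simp [EE, Finset.sum_add_distrib, ite_and]
  simp only [LL, Matrix.add_apply, vecMulVec_apply, Finset.sum_add_distrib, hs]
  simp only [bb, EE, Pi.sub_apply, Pi.single_apply]
  by_cases hij : i = j
  · subst hij
    by_cases h1 : i = u
    · subst h1; simp [h]; ring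
    · by_cases h2 : i = w
      · subst h2; simp [h1]; ring
      · simp [h1, h2]
  · by_cases h1 : i = u
    · subst h1
      by_cases h2 : j = w
      · subst h2; simp [hij, h, Ne.symm h]; ring
      · simp [hij, h, h2, Ne.symm hij]
    · by_cases h2 : i = w
      · subst h2
        by_cases h3 : j = u
        · subst h3; simp [hij, h, Ne.symm h]; ring
        · simp [hij, h1, h3, Ne.symm hij]
      · simp [hij, h1, h2]

lemma det_rank_one (A : Matrix V V ℝ) (hA : A.det ≠ 0) (c h : V → ℝ) (hh : A *ᵥ h = c) :
    (A + vecMulVec c c).det = A.det * (1 + c ⬝ᵥ h) := by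
  have hu : IsUnit A.det := isUnit_iff_ne_zero.mpr hA
  have h1 : A + vecMulVec c c = A * (1 + vecMulVec h c) := by
    rw [mul_add, mul_one, mul_vecMulVec, hh]
  rw [h1, det_mul, vecMulVec_eq Unit, det_one_add_replicateCol_mul_replicateRow]

/-- Determinant after adding an edge. -/
lemma det_add_edge (a0 : V → V → ℝ) (x : ℝ) {u w : V} (h : u ≠ w)
    (hA : (LL a0 x).det ≠ 0) (gu gw : V → ℝ)
    (h1 : LL a0 x *ᵥ gu = (LL a0 x).det • Pi.single u 1)
    (h2 : LL a0 x *ᵥ gw = (LL a0 x).det • Pi.single w 1) :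
    (LL (fun i j => a0 i j + EE u w i j) x).det =
      (LL a0 x).det + gu u + gw w - gu w - gw u := by
  rw [LL_add_edge a0 x h, det_rank_one _ hA _ ((LL a0 x).det⁻¹ • (gu - gw))]
  · simp only [bb, sub_dotProduct, single_dotProduct, Pi.smul_apply, Pi.sub_apply, smul_eq_mul]
    field_simp
    ring
  · rw [mulVec_smul, mulVec_sub, h1, h2, ← smul_sub, smul_smul, inv_mul_cancel₀ hA, one_smul, bb]

lemma sum_block (p : V → Prop) [DecidablePred p] (f : V → ℝ) (hf : ∀ k, ¬ p k → f k = 0) :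
    ∑ k, f k = ∑ k : {k // p k}, f k := by
  rw [← Fintype.sum_subtype_add_sum_subtype p f]
  rw [add_eq_left]
  exact Finset.sum_eq_zero fun k _ => hf k k.2

lemma LL_block (p : V → Prop) [DecidablePred p] (a : V → V → ℝ) (x : ℝ)
    (ha : ∀ i j, p i → ¬ p j → a i j = 0) :
    (LL a x).toSquareBlockProp p = LL (fun i j : {k // p k} => a i j) x := by
  ext i j
  have h1 : (LL a x).toSquareBlockProp p i j = LL a x i j := rfl
  rw [h1]
  simp only [LL, Subtype.ext_iff]
  rw [sum_block p (a i) fun k hk => ha i k i.2 hk]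

lemma extend_mulVec (p : V → Prop) [DecidablePred p] (a : V → V → ℝ) (x : ℝ)
    (ha : ∀ i j, p i → ¬ p j → a i j = 0) (ha' : ∀ i j, ¬ p i → p j → a i j = 0)
    (u : V) (hu : p u) (g : {k // p k} → ℝ) (d : ℝ)
    (hg : LL (fun i j : {k // p k} => a i j) x *ᵥ g = d • Pi.single ⟨u, hu⟩ 1) :
    LL a x *ᵥ (fun i => if h : p i then g ⟨i, h⟩ else 0) = d • Pi.single u 1 := by
  ext i
  rw [LL_mulVec]
  by_cases hi : p i
  · have := congrFun hg ⟨i, hi⟩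
    rw [LL_mulVec] at this
    rw [sum_block p]
    · have h3 : (d • (Pi.single u 1 : V → ℝ)) i =
          (d • (Pi.single ⟨u, hu⟩ 1 : {k // p k} → ℝ)) ⟨i, hi⟩ := by
        simp [Pi.single_apply, Subtype.ext_iff]
      rw [h3, ← this, dif_pos hi]
      congr 1
      refine Finset.sum_congr rfl fun k _ => ?_
      rw [dif_pos k.2]
    · intro k hk
      simp [ha i k hi hk]
  · have hne : i ≠ u := fun h => hi (h ▸ hu)
    simp only [hi, dif_neg, not_false_iff, Pi.smul_apply, Pi.single_apply, hne, if_false]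
    simp only [mul_zero, zero_add, smul_zero]
    refine Finset.sum_eq_zero fun k _ => ?_
    by_cases hk : p k
    · simp [ha' i k hi hk]
    · simp [hk]

end

/-- Inductive bound for a rooted graph. -/
def Q (V : Type) [Fintype V] [DecidableEq V] (a : V → V → ℝ) (x : ℝ) (u : V) : Prop :=
  0 < (LL a x).det ∧ (LL a x).det ≤ q x (Fintype.card V) ∧
  ∃ g : V → ℝ, LL a x *ᵥ g = (LL a x).det • Pi.single u 1 ∧ (∀ i, 1 ≤ g i) ∧
    g u ≤ r x (Fintype.card V)

lemma Q_join {V : Type} [Fintype V] [DecidableEq V] (p : V → Prop) [DecidablePred p]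
    (a : V → V → ℝ) {x : ℝ} (hx : 0 < x)
    (ha : ∀ i j, p i → ¬ p j → a i j = 0) (ha' : ∀ i j, ¬ p i → p j → a i j = 0)
    (u w : V) (hu : p u) (hw : ¬ p w)
    (h1 : Q {k // p k} (fun i j => a i j) x ⟨u, hu⟩)
    (h2 : Q {k // ¬ p k} (fun i j => a i j) x ⟨w, hw⟩) :
    Q V (fun i j => a i j + EE u w i j) x u := by
  have huw : u ≠ w := fun h => hw (h ▸ hu)
  obtain ⟨d1p, d1q, g1, e1, l1, r1⟩ := h1
  obtain ⟨d2p, d2q, g2, e2, l2, r2⟩ := h2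
  have hdet : (LL a x).det = (LL (fun i j : {k // p k} => a i j) x).det *
      (LL (fun i j : {k // ¬ p k} => a i j) x).det := by
    rw [twoBlockTriangular_det _ p, LL_block p a x ha, LL_block (fun k => ¬ p k) a x]
    · intro i j hi hj; exact ha' i j hi (not_not.mp hj)
    · intro i hi j hj
      have : i ≠ j := fun h => hi (h ▸ hj)
      simp [LL, this, ha' i j hi hj]
  set d1 := (LL (fun i j : {k // p k} => a i j) x).det with hd1
  set d2 := (LL (fun i j : {k // ¬ p k} => a i j) x).det with hd2
  have E1 := extend_mulVec p a x ha ha' u hu g1 d1 e1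
  have E2 := extend_mulVec (fun k => ¬ p k) a x (fun i j hi hj => ha' i j hi (not_not.mp hj))
    (fun i j hi hj => ha i j (not_not.mp hi) hj) w hw g2 d2 e2
  set f1 : V → ℝ := fun i => if h : p i then g1 ⟨i, h⟩ else 0 with hf1
  set f2 : V → ℝ := fun i => if h : ¬ p i then g2 ⟨i, h⟩ else 0 with hf2
  have f1u : f1 u = g1 ⟨u, hu⟩ := by simp [hf1, hu]
  have f1w : f1 w = 0 := by simp [hf1, hw]
  have f2u : f2 u = 0 := by simp [hf2, hu]
  have f2w : f2 w = g2 ⟨w, hw⟩ := by simp [hf2, hw]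
  set m1 := g1 ⟨u, hu⟩
  set m2 := g2 ⟨w, hw⟩
  have m1p : 1 ≤ m1 := l1 _
  have m2p : 1 ≤ m2 := l2 _
  have hD : (LL (fun i j => a i j + EE u w i j) x).det = d1 * d2 + m1 * d2 + d1 * m2 := by
    rw [det_add_edge a x huw (by rw [hdet]; positivity) (d2 • f1) (d1 • f2)]
    · simp [hdet, f1u, f1w, f2u, f2w]; ring
    · rw [mulVec_smul, E1, hdet, smul_smul, mul_comm]
    · rw [mulVec_smul, E2, hdet, smul_smul]
  have hcard : Fintype.card {k // p k} + Fintype.card {k // ¬ p k} = Fintype.card V := by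
    rw [← Fintype.card_sum]; exact Fintype.card_congr (Equiv.sumCompl p)
  have c1 : 0 < Fintype.card {k // p k} := Fintype.card_pos_iff.mpr ⟨⟨u, hu⟩⟩
  set n1 := Fintype.card {k // p k}
  set n2 := Fintype.card {k // ¬ p k}
  have q1 := qr_nonneg hx.le n1
  have q2 := qr_nonneg hx.le n2
  unfold Q
  rw [hD, ← hcard]
  refine ⟨by positivity, ?_, (d2 + m2) • f1 + m1 • f2, ?_, ?_, ?_⟩
  · rw [(qr_add x n1 n2).1]
    have := mul_le_mul d1q d2q d2p.le q1.1
    have := mul_le_mul r1 d2q d2p.le q1.2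
    have := mul_le_mul d1q r2 (by linarith) q1.1
    linarith
  · rw [LL_add_edge a x huw, add_mulVec, mulVec_add, mulVec_smul, mulVec_smul, E1, E2,
      vecMulVec_mulVec]
    have : bb u w ⬝ᵥ ((d2 + m2) • f1 + m1 • f2) = d2 * m1 := by
      simp [bb, sub_dotProduct, f1u, f1w, f2u, f2w]; ring
    rw [this]
    ext i
    simp [bb]
    ring
  · intro i
    by_cases hi : p i
    · have := l1 ⟨i, hi⟩
      simp [hf1, hf2, hi]
      nlinarith
    · have := l2 ⟨i, hi⟩
      simp [hf1, hf2, hi]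
      nlinarith
  · simp [f1u, f2u]
    obtain ⟨k, hk⟩ : ∃ k, n1 = k + 1 := ⟨n1 - 1, by omega⟩
    have := r_mul_le hx k n2
    rw [show k + n2 + 1 = n1 + n2 by omega, ← hk, r_succ] at this
    have := mul_le_mul (add_le_add d2q r2) r1 (by linarith) (by linarith)
    linarith

lemma aa_delete {V : Type} [DecidableEq V] (G : SimpleGraph V) {u w : V} (huw : G.Adj u w) :
    aa G = fun i j => aa (G.deleteEdges {s(u, w)}) i j + EE u w i j := by
  ext i j
  have hne := huw.ne
  simp only [aa, EE, SimpleGraph.deleteEdges_adj, Set.mem_singleton_iff, Sym2.eq_iff]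
  by_cases h1 : i = u ∧ j = w
  · obtain ⟨rfl, rfl⟩ := h1; simp [huw, hne]
  · by_cases h2 : i = w ∧ j = u
    · obtain ⟨rfl, rfl⟩ := h2; simp [huw.symm, hne, Ne.symm hne]
    · have hiff : (G.deleteEdges {s(u, w)}).Adj i j ↔ G.Adj i j := by
        simp [SimpleGraph.deleteEdges_adj, Sym2.eq_iff, h1, h2]
      by_cases c : G.Adj i j
      · rw [if_pos c, if_pos]
        · simp [h1, h2]
        · exact hiff.mpr c
      · rw [if_neg c, if_neg]
        · simp [h1, h2]
        · exact fun h => c (hiff.mp h)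

open Classical in
theorem tree_Q {x : ℝ} (hx : 0 < x) (n : ℕ) : ∀ (V : Type) [Fintype V] [DecidableEq V]
    (T : SimpleGraph V), Fintype.card V = n → T.IsTree → ∀ u, Q V (aa T) x u := by
  induction n using Nat.strong_induction_on with
  | _ n ih =>
  intro V _ _ T hn hT u
  by_cases hnb : ∃ w, T.Adj u w
  · obtain ⟨w, huw⟩ := hnb
    set T' := T.deleteEdges {s(u, w)} with hT'
    have hnr : ¬ T'.Reachable u w := by
      have := SimpleGraph.isAcyclic_iff_forall_adj_isBridge.mp hT.isAcyclic huw
      exact (SimpleGraph.isBridge_iff.mp this)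
    have hor : ∀ k, T'.Reachable u k ∨ T'.Reachable w k := by
      intro k
      obtain ⟨W⟩ := hT.connected.preconnected k u
      induction W with
      | nil => exact Or.inl (SimpleGraph.Reachable.refl _)
      | @cons a b c hab W ihW => 
        by_cases he : s(a, b) = s(c, w)
        · rw [Sym2.eq_iff] at he
          rcases he with ⟨rfl, rfl⟩ | ⟨rfl, rfl⟩
          · exact Or.inl (SimpleGraph.Reachable.refl _)
          · exact Or.inr (SimpleGraph.Reachable.refl _)
        · have hadj : T'.Adj b a := by
            rw [hT', SimpleGraph.deleteEdges_adj]
            refine ⟨hab.symm, ?_⟩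
            rw [Set.mem_singleton_iff, Sym2.eq_swap (a := b)]
            exact he
          exact (ihW huw hT' hnr).imp (fun h => h.trans hadj.reachable)
            (fun h => h.trans hadj.reachable)
    let p : V → Prop := fun k => T'.Reachable u k
    have hnp : ∀ k, ¬ p k ↔ T'.Reachable w k := fun k =>
      ⟨fun h => (hor k).resolve_left h, fun h h' => hnr (h'.trans h.symm)⟩
    have hac : T'.IsAcyclic := hT.isAcyclic.anti (SimpleGraph.deleteEdges_le _)
    have hsub : ∀ s : V, (T'.induce {k | T'.Reachable s k}).IsTree := by
      intro s
      refine ⟨?_, hac.induce _⟩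
      have := (T'.connectedComponentMk s).maximal_connected_induce_supp.prop
      have hs : (T'.connectedComponentMk s).supp = {k | T'.Reachable s k} := by
        ext k
        simp [SimpleGraph.ConnectedComponent.mem_supp_iff, SimpleGraph.reachable_comm]
      rwa [hs] at this
    have hpw : ¬ p w := hnr
    have hpu : p u := SimpleGraph.Reachable.refl _
    have hcross : ∀ i j, p i → ¬ p j → aa T' i j = 0 := by
      intro i j hi hj
      have : ¬ T'.Adj i j := fun h => hj (hi.trans h.reachable)
      simp [aa, this]
    have hcross' : ∀ i j, ¬ p i → p j → aa T' i j = 0 := by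
      intro i j hi hj
      have : ¬ T'.Adj i j := fun h => hi (hj.trans h.symm.reachable)
      simp [aa, this]
    have key := Q_join p (aa T') hx hcross hcross' u w hpu hpw
      (ih _ (by rw [← hn]; exact Fintype.card_subtype_lt hpw) {k // p k} 
        (T'.induce {k | T'.Reachable u k}) rfl (hsub u) ⟨u, hpu⟩)
      (by
        have hset : {k | ¬ p k} = {k | T'.Reachable w k} := by ext k; exact hnp k
        have h2 : (T'.induce {k | ¬ p k}).IsTree := by rw [hset]; exact hsub w
        exact (ih _ (by rw [← hn]; exact Fintype.card_subtype_lt (not_not.mpr hpu)) {k // ¬ p k} 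
          (T'.induce {k | ¬ p k}) rfl h2 ⟨w, hpw⟩))
    rw [aa_delete T huw]
    exact key
  · have hall : ∀ k, k = u := by
      intro k
      obtain ⟨W⟩ := hT.connected.preconnected u k
      cases W with
      | nil => rfl
      | cons h _ => exact absurd ⟨_, h⟩ hnb
    have : Unique V := ⟨⟨u⟩, hall⟩
    have hdet : (LL (aa T) x).det = x := by
      rw [det_unique]; simp [LL]
    have hc : Fintype.card V = 1 := Fintype.card_unique
    unfold Q
    rw [hdet, hc]
    refine ⟨hx, by simp [q_succ, q_zero, r_zero], fun _ => 1, ?_, fun _ => le_rfl,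
      by simp [r_succ, q_zero, r_zero]⟩
    ext i
    rw [LL_mulVec, hall i]
    simp

/-- path weights -/
def pp (n : ℕ) (i j : Fin n) : ℝ := 
  if (i : ℕ) + 1 = j ∨ (j : ℕ) + 1 = i then 1 else 0

lemma pp_sum (N : ℕ) (i : Fin N) (f : ℕ → ℝ) :
    ∑ k : Fin N, pp N i k * f k =
      (if (i : ℕ) + 1 < N then f (i + 1) else 0) + (if 0 < (i : ℕ) then f (i - 1) else 0) := by
  unfold pp
  rw [Fin.sum_univ_eq_sum_range
    (fun k => (if (i : ℕ) + 1 = k ∨ k + 1 = i then (1 : ℝ) else 0) * f k) N]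
  have hi := i.2
  have h1 : ∀ k ∈ Finset.range N, (if (i : ℕ) + 1 = k ∨ k + 1 = i then (1 : ℝ) else 0) * f k =
      (if (i : ℕ) + 1 = k then f k else 0) +
        (if (i : ℕ) - 1 = k then (if 0 < (i : ℕ) then f k else 0) else 0) := by
    intro k _
    by_cases a1 : (i : ℕ) + 1 = k
    · have : ¬ ((i : ℕ) - 1 = k) := by omega
      simp [a1, this]
    · by_cases a2 : k + 1 = (i : ℕ)
      · have : (i : ℕ) - 1 = k := by omega
        have h0 : 0 < (i : ℕ) := by omega
        simp [a1, a2, this, h0]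
      · by_cases a3 : (i : ℕ) - 1 = k
        · have h0 : ¬ 0 < (i : ℕ) := by omega
          simp [a1, a2, h0]
        · simp [a1, a2, a3]
  rw [Finset.sum_congr rfl h1, Finset.sum_add_distrib, Finset.sum_ite_eq, Finset.sum_ite_eq]
  have : (i : ℕ) - 1 < N := by omega
  simp [this]

lemma r_rec (x : ℝ) (m : ℕ) :
    x * r x (m + 1) + (r x (m + 1) - r x (m + 2)) + (r x (m + 1) - r x m) = 0 := by
  simp only [r_succ, q_succ]; ring

lemma r_one (x : ℝ) : r x 1 = 1 := by simp [r_succ, q_zero, r_zero]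

lemma path_col_first (x : ℝ) (n : ℕ) :
    LL (pp (n + 1)) x *ᵥ (fun i => r x (n + 1 - i)) = q x (n + 1) • Pi.single 0 1 := by
  ext i
  rw [LL_mulVec, pp_sum (n + 1) i (fun k => r x (n + 1 - i) - r x (n + 1 - k))]
  have hi := i.2
  by_cases h0 : i = 0
  · subst h0
    have := r_rec x n
    by_cases hn : n = 0
    · subst hn; simp [r_one, q_succ, q_zero, r_zero]
    · have : 0 < n := by omega
      simp [this, q_succ, r_succ]; ring
  · have h1 : 0 < (i : ℕ) := by
      rcases Nat.eq_zero_or_pos (i : ℕ) with h | h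
      · exact absurd (Fin.ext h) h0
      · exact h
    obtain ⟨m, hm⟩ : ∃ m, n + 1 - (i : ℕ) = m + 1 := ⟨n - i, by omega⟩
    have e1 : n + 1 - ((i : ℕ) - 1) = m + 2 := by omega
    have e2 : n + 1 - ((i : ℕ) + 1) = m := by omega
    have := r_rec x m
    simp only [hm, e1, e2, h1, if_true, Pi.smul_apply, Pi.single_apply, h0, if_false, smul_zero]
    split_ifs with h2
    · linarith
    · have : m = 0 := by omega
      subst this
      rw [r_one, r_zero] at *
      linarith

lemma path_col_last (x : ℝ) (n : ℕ) :
    LL (pp (n + 1)) x *ᵥ (fun i => r x (i + 1)) = q x (n + 1) • Pi.single (Fin.last n) 1 := by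
  ext i
  rw [LL_mulVec, pp_sum (n + 1) i (fun k => r x (i + 1) - r x (k + 1))]
  have hi := i.2
  have hrec := r_rec x i
  have hB : (if 0 < (i : ℕ) then r x (i + 1) - r x ((i : ℕ) - 1 + 1) else 0) =
      r x (i + 1) - r x i := by
    split_ifs with h
    · rw [Nat.sub_add_cancel h]
    · have : (i : ℕ) = 0 := by omega
      rw [this, r_one, r_zero, sub_self]
  rw [hB]
  by_cases h0 : i = Fin.last n
  · subst h0
    simp [q_succ, r_succ]; ring
  · have h1 : (i : ℕ) < n := by
      have : (i : ℕ) ≠ n := fun h => h0 (Fin.ext h)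
      omega
    simp [h1, h0]
    linarith

lemma q_pos {x : ℝ} (hx : 0 < x) (n : ℕ) : 0 < q x (n + 1) := by
  induction n with
  | zero => simp [q_succ, q_zero, r_zero, hx]
  | succ n ih =>
    rw [q_succ]
    have := (qr_nonneg hx.le (n + 1)).2
    positivity

lemma path_det {x : ℝ} (hx : 0 < x) (n : ℕ) : (LL (pp (n + 1)) x).det = q x (n + 1) := by
  induction n with
  | zero =>
    rw [det_fin_one]
    simp [LL, q_succ, q_zero, r_zero]
  | succ n ih =>
    let a0 : Fin (n + 2) → Fin (n + 2) → ℝ :=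
      fun i j => Fin.cases 0 (fun i' => Fin.cases 0 (fun j' => pp (n + 1) i' j') j) i
    have ha : pp (n + 2) = fun i j => a0 i j + EE 0 1 i j := by
      ext i j
      refine Fin.cases ?_ (fun i' => ?_) i <;> refine Fin.cases ?_ (fun j' => ?_) j
      · simp [pp, a0, EE]
      · have e0 : a0 0 j'.succ = 0 := rfl
        rw [e0]
        by_cases e : j' = 0
        · subst e; simp [pp, EE]
        · have e2 : ¬ ((0 : ℕ) = j') := fun h => e (Fin.ext h.symm)
          have e3 : ¬ (j'.succ = 1) := fun h => e (Fin.succ_injective _ h)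
          simp [pp, EE, e, e2, e3]
      · have e0 : a0 i'.succ 0 = 0 := rfl
        rw [e0]
        by_cases e : i' = 0
        · subst e; simp [pp, EE]
        · have e2 : ¬ ((0 : ℕ) = i') := fun h => e (Fin.ext h.symm)
          have e3 : ¬ (i'.succ = 1) := fun h => e (Fin.succ_injective _ h)
          simp [pp, EE, e, e2, e3]
      · simp [pp, a0, EE]
    have hss : ∀ i j : Fin (n + 1), LL a0 x i.succ j.succ = LL (pp (n + 1)) x i j := by
      intro i j
      simp [LL, Fin.sum_univ_succ, a0]
    have h0s : ∀ j : Fin (n + 1), LL a0 x 0 j.succ = 0 := by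
      intro j
      simp [LL, a0, (Fin.succ_ne_zero j).symm]
    have hs0 : ∀ j : Fin (n + 1), LL a0 x j.succ 0 = 0 := by
      intro j
      simp [LL, a0]
    have h00 : LL a0 x 0 0 = x := by simp [LL, a0]
    have hdet : (LL a0 x).det = x * q x (n + 1) := by
      rw [det_succ_row_zero, Fin.sum_univ_succ]
      have hsub : (LL a0 x).submatrix Fin.succ Fin.succ = LL (pp (n + 1)) x := by
        ext i j; exact hss i j
      simp [h0s, h00, hsub, ih]
    have hq := q_pos hx n
    rw [ha, det_add_edge a0 x (by simp) (by rw [hdet]; positivity)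
      (q x (n + 1) • Pi.single 0 1) (x • Fin.cons 0 (fun i : Fin (n + 1) => r x (n + 1 - i)))]
    · have e1 : (1 : Fin (n + 2)) = Fin.succ 0 := rfl
      rw [hdet]
      simp only [e1, Pi.smul_apply, Fin.cons_succ, Fin.cons_zero, Pi.single_apply]
      simp [q_succ, r_succ]
      ring
    · rw [hdet]
      ext i
      refine Fin.cases ?_ (fun i' => ?_) i
      · simp [mulVec_smul, h00]; ring
      · simp [mulVec_smul, hs0]
    · rw [hdet]
      have hc := path_col_first x n
      ext i
      refine Fin.cases ?_ (fun i' => ?_) i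
      · simp [mulVec_smul, mulVec, dotProduct, Fin.sum_univ_succ, h0s]
      · have := congrFun hc i'
        simp only [mulVec, dotProduct] at this
        rw [mulVec_smul]
        simp only [Pi.smul_apply, mulVec, dotProduct, Fin.sum_univ_succ (n := n + 1), Fin.cons_zero,
          Fin.cons_succ, hss, this, mul_zero, zero_add]
        have e1 : (1 : Fin (n + 2)) = Fin.succ 0 := rfl
        simp only [e1, Pi.single_apply, Fin.succ_inj, smul_eq_mul]
        ring

lemma cycle_det {x : ℝ} (hx : 0 < x) (n : ℕ) :
    (LL (aa (SimpleGraph.cycleGraph (n + 3))) x).det = q x (n + 3) + 2 * r x (n + 3) - 2 := by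
  have ha : aa (SimpleGraph.cycleGraph (n + 3)) =
      fun i j => pp (n + 3) i j + EE 0 (Fin.last (n + 2)) i j := by
    ext i j
    have hi := i.2
    have hj := j.2
    have key : (SimpleGraph.cycleGraph (n + 3)).Adj i j ↔
        ((i : ℕ) + 1 = j ∨ (j : ℕ) + 1 = i) ∨ ((i : ℕ) = 0 ∧ (j : ℕ) = n + 2) ∨
          ((i : ℕ) = n + 2 ∧ (j : ℕ) = 0) := by
      rw [SimpleGraph.cycleGraph_adj']
      rcases lt_trichotomy i j with h | h | h
      · have h1 := Fin.coe_sub_iff_lt.mpr h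
        have h2 := Fin.coe_sub_iff_le.mpr h.le
        have h3 : (i : ℕ) < j := h
        rw [h1, h2]; omega
      · subst h; simp only [sub_self, Fin.val_zero]; omega
      · have h1 := Fin.coe_sub_iff_lt.mpr h
        have h2 := Fin.coe_sub_iff_le.mpr h.le
        have h3 : (j : ℕ) < i := h
        rw [h1, h2]; omega
    simp only [aa, pp, EE, key, Fin.ext_iff, Fin.val_zero, Fin.val_last]
    by_cases c1 : (i : ℕ) + 1 = j ∨ (j : ℕ) + 1 = i
    · have c2 : ¬ ((i : ℕ) = 0 ∧ (j : ℕ) = n + 2) := by omega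
      have c3 : ¬ ((i : ℕ) = n + 2 ∧ (j : ℕ) = 0) := by omega
      simp only [c1, c2, c3]; simp
    · by_cases c2 : ((i : ℕ) = 0 ∧ (j : ℕ) = n + 2)
      · have c3 : ¬ ((i : ℕ) = n + 2 ∧ (j : ℕ) = 0) := by omega
        simp only [c1, c2, c3]; simp
      · by_cases c3 : ((i : ℕ) = n + 2 ∧ (j : ℕ) = 0) 
        · simp only [c1, c2, c3]; simp
        · simp only [c1, c2, c3]; simp
  have hd := path_det hx (n + 2)
  have hq := q_pos hx (n + 2)
  have h1 := path_col_first x (n + 2)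
  have h2 := path_col_last x (n + 2)
  rw [← hd] at h1 h2
  rw [ha, det_add_edge _ x (by simp [Fin.ext_iff]) (by rw [hd]; exact hq.ne') _ _ h1 h2, hd]
  have e : n + 2 + 1 - (n + 2) = 1 := by omega
  simp [r_one, e]
  ring

lemma lap_eq {V : Type} [Fintype V] [DecidableEq V] (G : SimpleGraph V) [DecidableRel G.Adj]
    (x : ℝ) : G.lapMatrix ℝ + x • (1 : Matrix V V ℝ) = LL (aa G) x := by
  ext i j
  simp only [SimpleGraph.lapMatrix, SimpleGraph.degMatrix, Matrix.add_apply, Matrix.sub_apply,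
    diagonal_apply, SimpleGraph.adjMatrix_apply, Matrix.smul_apply, one_apply, LL, aa,
    SimpleGraph.degree_eq_sum_if_adj]
  by_cases h : i = j
  · subst h
    simp only [if_true, smul_eq_mul, mul_one, SimpleGraph.irrefl, if_false, sub_zero]
    rw [add_comm]
    congr 1
    refine Finset.sum_congr rfl fun k _ => ?_
    split_ifs <;> rfl
  · simp [h]

lemma unicyclic_det {V : Type} [Fintype V] [DecidableEq V] (G : SimpleGraph V)
    (hconn : G.Connected) (hedges : Nat.card G.edgeSet = Fintype.card V) {x : ℝ} (hx : 0 < x) :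
    (LL (aa G) x).det ≤ q x (Fintype.card V) + 2 * r x (Fintype.card V) - 2 := by
  have hnt : ¬ G.IsAcyclic := by
    intro h
    have := (SimpleGraph.isTree_iff_connected_and_card.mp ⟨hconn, h⟩).2
    rw [hedges, Nat.card_eq_fintype_card] at this
    omega
  rw [SimpleGraph.isAcyclic_iff_forall_adj_isBridge] at hnt
  push Not at hnt
  obtain ⟨u, w, huw, hb⟩ := hnt
  have hT : (G.deleteEdges {s(u, w)}).IsTree := by
    rw [SimpleGraph.isTree_iff_connected_and_card]
    refine ⟨hconn.connected_delete_edge_of_not_isBridge hb, ?_⟩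
    rw [SimpleGraph.edgeSet_deleteEdges, Nat.card_eq_fintype_card (α := V), ← hedges,
      Nat.card_coe_set_eq, Nat.card_coe_set_eq]
    exact Set.ncard_sdiff_singleton_add_one huw (Set.toFinite _)
  set T := G.deleteEdges {s(u, w)} with hTd
  have hne := huw.ne
  have ha : aa G = fun i j => aa T i j + EE u w i j := aa_delete G huw
  obtain ⟨dp, dq, g, e1, l1, r1⟩ := tree_Q hx _ V T rfl hT u
  obtain ⟨-, -, g', e2, l2, r2⟩ := tree_Q hx _ V T rfl hT w
  rw [ha, det_add_edge _ x hne dp.ne' g g' e1 e2]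
  have := l1 w
  have := l2 u
  linarith

end DOpt

theorem stmt_9 (v : ℕ) (hv : 3 ≤ v) (G : SimpleGraph (Fin v)) [DecidableRel G.Adj]
    (hconn : G.Connected) (hedges : G.edgeFinset.card = v) :
    ∀ y : ℝ, 0 ≤ y →
      Matrix.det (G.lapMatrix ℝ + ((v : ℝ) * y) • (1 : Matrix (Fin v) (Fin v) ℝ)) ≤
      Matrix.det ((SimpleGraph.cycleGraph v).lapMatrix ℝ +
        ((v : ℝ) * y) • (1 : Matrix (Fin v) (Fin v) ℝ)) := by
  intro y hy
  obtain ⟨n, rfl⟩ : ∃ n, v = n + 3 := ⟨v - 3, by omega⟩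
  rcases hy.eq_or_lt with rfl | hy
  · have h0 : ∀ (H : SimpleGraph (Fin (n + 3))) [DecidableRel H.Adj],
        (H.lapMatrix ℝ).det = 0 := by
      intro H _
      refine Matrix.exists_mulVec_eq_zero_iff.mp
        ⟨fun _ => 1, ?_, H.lapMatrix_mulVec_const_eq_zero⟩
      intro h
      simpa using congrFun h 0
    simp [h0]
  · have hx : 0 < ((n + 3 : ℕ) : ℝ) * y := by positivity
    rw [DOpt.lap_eq, DOpt.lap_eq, DOpt.cycle_det hx]
    have := DOpt.unicyclic_det G hconn (by
      rw [Fintype.card_fin, Nat.card_eq_fintype_card, ← SimpleGraph.edgeFinset_card]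
      exact hedges) hx
    rwa [Fintype.card_fin] at this
end

section
/- Let v ≥ 3 and let G be a connected simple graph on v vertices with exactly v edges. Then for every real y ≥ 1, trace( (L(C_v) + vy·I)^{−1} ) ≤ trace( (L(G) + vy·I)^{−1} ), where C_v is the cycle graph on v vertices and L(·) denotes the Laplacian matrix (both matrices are positive definite, hence invertible, for y > 0). -/
open Matrix

lemma iso_of_regular (v : ℕ) (G : SimpleGraph (Fin v)) [DecidableRel G.Adj]
    (hconn : G.Connected) (hedges : G.edgeFinset.card = v) (hd : ∀ i, G.degree i = 2) :
    Nonempty (SimpleGraph.cycleGraph v ≃g G) := by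
  classical
  have hna : ¬ G.IsAcyclic := by
    intro h
    have := (SimpleGraph.IsTree.card_edgeFinset (G := G) ⟨hconn, h⟩)
    simp at this
    omega
  rw [SimpleGraph.isAcyclic_iff_free_cycleGraph] at hna
  simp only [SimpleGraph.Free, not_forall, not_not] at hna
  obtain ⟨n, hn, ⟨f⟩⟩ := hna
  have hinj : Function.Injective f := f.injective
  have hadj : ∀ {i j}, (SimpleGraph.cycleGraph n).Adj i j → G.Adj (f i) (f j) :=
    fun h => f.toHom.map_adj h
  have hN : ∀ i, ((SimpleGraph.cycleGraph n).neighborFinset i).image f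
      = G.neighborFinset (f i) := by
    intro i
    apply Finset.eq_of_subset_of_card_le
    · intro x hx
      simp only [Finset.mem_image, SimpleGraph.mem_neighborFinset] at hx ⊢
      obtain ⟨j, hj, rfl⟩ := hx
      exact hadj hj
    · rw [Finset.card_image_of_injective _ hinj, SimpleGraph.card_neighborFinset_eq_degree,
        SimpleGraph.card_neighborFinset_eq_degree, hd]
      obtain ⟨k, rfl⟩ : ∃ k, n = k + 3 := ⟨n - 3, by omega⟩
      rw [SimpleGraph.cycleGraph_degree_three_le]
  have hstep : ∀ i x, G.Adj (f i) x → ∃ j, f j = x ∧ (SimpleGraph.cycleGraph n).Adj i j := by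
    intro i x h
    have : x ∈ G.neighborFinset (f i) := by simpa using h
    rw [← hN] at this
    simp only [Finset.mem_image, SimpleGraph.mem_neighborFinset] at this
    obtain ⟨j, h1, h2⟩ := this
    exact ⟨j, h2, h1⟩
  have hwalk : ∀ {a b} (w : G.Walk a b), (∃ i, f i = a) → ∃ i, f i = b := by
    intro a b w
    induction w with
    | nil => exact id
    | cons h p ih =>
      rintro ⟨i, rfl⟩
      obtain ⟨j, hj, -⟩ := hstep i _ h
      exact ih ⟨j, hj⟩
  have hsurj : Function.Surjective f := by
    intro x
    obtain ⟨w⟩ := hconn.preconnected (f ⟨0, by omega⟩) x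
    exact hwalk w ⟨_, rfl⟩
  have hcard : n = v := by
    simpa using Fintype.card_of_bijective ⟨hinj, hsurj⟩
  subst hcard
  refine ⟨⟨Equiv.ofBijective f ⟨hinj, hsurj⟩, ?_⟩⟩
  intro a b
  change G.Adj (f a) (f b) ↔ _
  constructor
  · intro h
    obtain ⟨j, hj, h'⟩ := hstep a _ h
    rwa [← hinj hj]
  · exact hadj

lemma trace_of_iso (v : ℕ) (G H : SimpleGraph (Fin v)) [DecidableRel G.Adj] [DecidableRel H.Adj]
    (e : H ≃g G) (c : ℝ) :
    trace ((H.lapMatrix ℝ + c • (1 : Matrix (Fin v) (Fin v) ℝ))⁻¹) =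
    trace ((G.lapMatrix ℝ + c • (1 : Matrix (Fin v) (Fin v) ℝ))⁻¹) := by
  have h : H.lapMatrix ℝ + c • (1 : Matrix (Fin v) (Fin v) ℝ) =
      (G.lapMatrix ℝ + c • (1 : Matrix (Fin v) (Fin v) ℝ)).submatrix e.toEquiv e.toEquiv := by
    ext i j
    have h1 : G.degree (e i) = H.degree i := e.degree_eq i
    simp [SimpleGraph.lapMatrix, SimpleGraph.degMatrix, Matrix.diagonal_apply, Matrix.one_apply, h1,
      e.map_adj_iff, SimpleGraph.adjMatrix_apply]
  rw [h, Matrix.inv_submatrix_equiv]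
  simp only [Matrix.trace, Matrix.diag_apply, Matrix.submatrix_apply]
  exact Equiv.sum_comp e.toEquiv (fun i => (G.lapMatrix ℝ + c • (1 : Matrix (Fin v) (Fin v) ℝ))⁻¹ i i)

/-- The expansion of the resolvent. -/
lemma expand {n : ℕ} (M N : Matrix (Fin n) (Fin n) ℝ) (m : ℝ)
    (h1 : N * M = 1 - m • N) (h2 : M * N = 1 - m • N) :
    m ^ 4 * trace N = m ^ 3 * n - m ^ 2 * trace M + m * trace (M * M) - trace (M * M * M)
      + trace ((M * M) * N * (M * M)) := by
  have e : (M * M) * N * (M * M) = M * M * M - m • (M * M) + m ^ 2 • M - m ^ 3 • 1 + m ^ 4 • N := by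
    have a1 : (M * M) * N * (M * M) = M * (M * N) * (M * M) := by simp only [mul_assoc]
    rw [a1, h2]
    have a2 : M * (1 - m • N) * (M * M) = M * M * M - m • ((M * N) * M * M) := by
      simp only [mul_sub, sub_mul, mul_one, mul_smul_comm, smul_mul, mul_assoc]
    rw [a2, h2]
    have a3 : (1 - m • N) * M * M = M * M - m • ((N * M) * M) := by
      simp only [sub_mul, one_mul, smul_mul, mul_assoc]
    rw [a3, h1]
    have a4 : (1 - m • N) * M = M - m • (N * M) := by
      simp only [sub_mul, one_mul, smul_mul]
    rw [a4, h1]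
    module
  rw [e]
  simp only [trace_add, trace_sub, trace_smul, smul_eq_mul, trace_one, Fintype.card_fin]
  ring

section
variable {n : ℕ} (G : SimpleGraph (Fin n)) [DecidableRel G.Adj]

/-- Shifted Laplacian. -/
noncomputable def shL : Matrix (Fin n) (Fin n) ℝ := G.lapMatrix ℝ - (2 : ℝ) • 1

lemma posDef_res (c : ℝ) (hc : 0 < c) : (G.lapMatrix ℝ + c • (1 : Matrix (Fin n) (Fin n) ℝ)).PosDef :=
  Matrix.PosDef.posSemidef_add (G.posSemidef_lapMatrix ℝ) (Matrix.PosDef.smul Matrix.PosDef.one hc)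

lemma res_mul (c : ℝ) (hc : 0 < c) :
    (G.lapMatrix ℝ + c • (1 : Matrix (Fin n) (Fin n) ℝ))⁻¹ * shL G =
      1 - (c + 2) • (G.lapMatrix ℝ + c • (1 : Matrix (Fin n) (Fin n) ℝ))⁻¹ ∧
    shL G * (G.lapMatrix ℝ + c • (1 : Matrix (Fin n) (Fin n) ℝ))⁻¹ =
      1 - (c + 2) • (G.lapMatrix ℝ + c • (1 : Matrix (Fin n) (Fin n) ℝ))⁻¹ := by
  have hu := (Matrix.isUnit_iff_isUnit_det _).1 (posDef_res G c hc).isUnit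
  have hM : shL G = (G.lapMatrix ℝ + c • (1 : Matrix (Fin n) (Fin n) ℝ)) - (c + 2) • 1 := by
    rw [shL]; module
  rw [hM]
  constructor
  · rw [mul_sub, Matrix.nonsing_inv_mul _ hu]; simp
  · rw [sub_mul, Matrix.mul_nonsing_inv _ hu]; simp

lemma shL_symm : (shL G)ᴴ = shL G := by
  rw [shL, conjTranspose_sub, (G.isHermitian_lapMatrix ℝ).eq]; simp

lemma Q_nonneg (c : ℝ) (hc : 0 < c) :
    0 ≤ trace ((shL G * shL G) * (G.lapMatrix ℝ + c • (1 : Matrix (Fin n) (Fin n) ℝ))⁻¹ *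
      (shL G * shL G)) := by
  have := ((posDef_res G c hc).inv.posSemidef.conjTranspose_mul_mul_same (shL G * shL G)).trace_nonneg
  rwa [conjTranspose_mul, shL_symm] at this

lemma Q_le (c : ℝ) (hc : 0 < c) :
    c * trace ((shL G * shL G) * (G.lapMatrix ℝ + c • (1 : Matrix (Fin n) (Fin n) ℝ))⁻¹ *
      (shL G * shL G)) ≤ trace ((shL G * shL G) * (shL G * shL G)) := by
  set X := (G.lapMatrix ℝ + c • (1 : Matrix (Fin n) (Fin n) ℝ)) with hX
  set L := G.lapMatrix ℝ with hL
  have hu := (Matrix.isUnit_iff_isUnit_det _).1 (posDef_res G c hc).isUnit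
  have hNX : X⁻¹ * X = 1 := Matrix.nonsing_inv_mul _ hu
  have hXN : X * X⁻¹ = 1 := Matrix.mul_nonsing_inv _ hu
  have hLs : Lᴴ = L := (G.isHermitian_lapMatrix ℝ).eq
  have hNs : (X⁻¹)ᴴ = X⁻¹ := (posDef_res G c hc).inv.isHermitian.eq
  have hp : (X * L).PosSemidef := by
    rw [hX, add_mul, smul_mul, one_mul]
    refine Matrix.PosSemidef.add ?_ ((G.posSemidef_lapMatrix ℝ).smul hc.le)
    have := Matrix.posSemidef_conjTranspose_mul_self L
    rwa [hLs] at this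
  have h := (hp.conjTranspose_mul_mul_same (X⁻¹ * (shL G * shL G))).trace_nonneg
  rw [conjTranspose_mul, conjTranspose_mul, shL_symm, hNs] at h
  have e : shL G * shL G * X⁻¹ * (X * L) * (X⁻¹ * (shL G * shL G)) =
      (shL G * shL G) * (shL G * shL G) - c • ((shL G * shL G) * X⁻¹ * (shL G * shL G)) := by
    have hLe : L = X - c • 1 := by rw [hX]; module
    calc _ = shL G * shL G * (X⁻¹ * X) * L * X⁻¹ * (shL G * shL G) := by simp only [mul_assoc]
      _ = shL G * shL G * (L * X⁻¹) * (shL G * shL G) := by rw [hNX]; simp only [mul_assoc, one_mul, mul_one]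
      _ = _ := by
        have : L * X⁻¹ = 1 - c • X⁻¹ := by
          conv_lhs => rw [hLe, sub_mul, hXN]
          simp
        rw [this]
        simp only [mul_sub, sub_mul, mul_one, mul_smul_comm, smul_mul, mul_assoc]
  rw [e, trace_sub, trace_smul, smul_eq_mul] at h
  linarith

lemma shL_eq : shL G = diagonal (fun i => (G.degree i : ℝ) - 2) - G.adjMatrix ℝ := by
  ext i j
  simp [shL, SimpleGraph.lapMatrix, SimpleGraph.degMatrix, Matrix.diagonal_apply, Matrix.one_apply]
  split_ifs <;> ring

lemma tr1 : trace (shL G) = ∑ i, ((G.degree i : ℝ) - 2) := by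
  rw [shL_eq, trace_sub, SimpleGraph.trace_adjMatrix, trace_diagonal, sub_zero]

lemma trDA (e : Fin n → ℝ) : trace (diagonal e * G.adjMatrix ℝ) = 0 := by
  simp only [trace, diag_apply, diagonal_mul, SimpleGraph.adjMatrix_apply]
  simp

lemma trDAA (e : Fin n → ℝ) : trace (diagonal e * (G.adjMatrix ℝ * G.adjMatrix ℝ))
    = ∑ i, e i * G.degree i := by
  simp only [trace, diag_apply, diagonal_mul, SimpleGraph.adjMatrix_mul_self_apply_self]

lemma trAA : trace (G.adjMatrix ℝ * G.adjMatrix ℝ) = ∑ i, (G.degree i : ℝ) := by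
  simp only [trace, diag_apply, SimpleGraph.adjMatrix_mul_self_apply_self]

lemma tr2 : trace (shL G * shL G) = ∑ i, ((G.degree i : ℝ) - 2) ^ 2 + ∑ i, (G.degree i : ℝ) := by
  rw [shL_eq]
  set e := fun i => (G.degree i : ℝ) - 2 with he
  have : (diagonal e - G.adjMatrix ℝ) * (diagonal e - G.adjMatrix ℝ) =
    diagonal e * diagonal e - diagonal e * G.adjMatrix ℝ - G.adjMatrix ℝ * diagonal e
      + G.adjMatrix ℝ * G.adjMatrix ℝ := by noncomm_ring
  rw [this, trace_add, trace_sub, trace_sub, trace_mul_comm (G.adjMatrix ℝ) (diagonal e), trDA, trAA,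
    diagonal_mul_diagonal, trace_diagonal]
  simp [he, sq]

lemma tr3 : trace (shL G * shL G * shL G) = ∑ i, ((G.degree i : ℝ) - 2) ^ 3
    + 3 * ∑ i, ((G.degree i : ℝ) - 2) * G.degree i
    - trace (G.adjMatrix ℝ * G.adjMatrix ℝ * G.adjMatrix ℝ) := by
  rw [shL_eq]
  set e := fun i => (G.degree i : ℝ) - 2 with he
  set A := G.adjMatrix ℝ
  set D := diagonal e
  have : (D - A) * (D - A) * (D - A) = D * D * D - D * D * A - D * (A * D) - A * (D * D)
    + D * (A * A) + (A * D) * A + (A * A) * D - A * A * A := by noncomm_ring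
  have hDD : D * D = diagonal (fun i => e i * e i) := diagonal_mul_diagonal _ _
  have c1 : trace (D * (A * D)) = trace (D * D * A) := by rw [trace_mul_comm, mul_assoc, trace_mul_comm]
  have c2 : trace (A * (D * D)) = trace (D * D * A) := by rw [trace_mul_comm]
  have c3 : trace (A * D * A) = trace (D * (A * A)) := by rw [mul_assoc, trace_mul_comm, mul_assoc]
  have c4 : trace (A * A * D) = trace (D * (A * A)) := by rw [trace_mul_comm]
  have c5 : trace (D * D * A) = 0 := by rw [hDD]; exact trDA G _
  have c6 : trace (D * D * D) = ∑ i, e i ^ 3 := by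
    rw [hDD, diagonal_mul_diagonal, trace_diagonal]
    exact Finset.sum_congr rfl fun i _ => by ring
  rw [this]
  simp only [trace_add, trace_sub, c1, c2, c3, c4, c5, c6]
  rw [trDAA]
  ring

lemma trA3_nonneg : 0 ≤ trace (G.adjMatrix ℝ * G.adjMatrix ℝ * G.adjMatrix ℝ) := by
  have h : ∀ i j, 0 ≤ G.adjMatrix ℝ i j := fun i j => by
    rw [SimpleGraph.adjMatrix_apply]; split_ifs <;> norm_num
  simp only [trace, diag_apply, mul_apply]
  exact Finset.sum_nonneg fun i _ => Finset.sum_nonneg fun j _ =>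
    mul_nonneg (Finset.sum_nonneg fun k _ => mul_nonneg (h _ _) (h _ _)) (h _ _)
end

section cyc
variable {n : ℕ}

noncomputable def pm (k : Fin (n + 3)) : Matrix (Fin (n + 3)) (Fin (n + 3)) ℝ :=
  Matrix.of fun i j => if j = i + k then 1 else 0

lemma pm_mul (a b : Fin (n + 3)) : pm a * pm b = pm (a + b) := by
  ext i j
  simp only [pm, mul_apply, of_apply]
  rw [Finset.sum_eq_single (i + a)]
  · simp [add_assoc]
  · intro x _ hx; simp [hx]
  · simp

lemma pm_trace (a : Fin (n + 3)) : trace (pm a) = if a = 0 then (n + 3 : ℝ) else 0 := by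
  simp [pm, trace]

open Fin.CommRing in
lemma nz (k : ℕ) (h0 : 0 < k) (h : k < n + 3) : ((k : ℕ) : Fin (n + 3)) ≠ 0 := by
  rw [Ne, Fin.natCast_eq_zero]
  exact Nat.not_dvd_of_pos_of_lt h0 h

open Fin.CommRing in
lemma nz2 : (1 + 1 : Fin (n + 3)) ≠ 0 := by
  have := nz (n := n) 2 (by norm_num) (by omega)
  intro h; apply this; rw [← h]; push_cast; norm_num

open Fin.CommRing in
lemma nz3 (hn : 1 ≤ n) : (1 + 1 + 1 : Fin (n + 3)) ≠ 0 := by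
  have := nz (n := n) 3 (by norm_num) (by omega)
  intro h; apply this; rw [← h]; push_cast; norm_num

open Fin.CommRing in
lemma nz4 (hn : 2 ≤ n) : (1 + 1 + 1 + 1 : Fin (n + 3)) ≠ 0 := by
  have := nz (n := n) 4 (by norm_num) (by omega)
  intro h; apply this; rw [← h]; push_cast; norm_num

lemma cyc_eq : (SimpleGraph.cycleGraph (n + 3)).adjMatrix ℝ = pm 1 + pm (-1) := by
  ext i j
  have h12 : (1 : Fin (n+3)) ≠ -1 := by
    intro h
    apply nz2 (n := n)
    nth_rw 1 [h]; abel
  have e1 : i - j = 1 ↔ j = i + -1 := by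
    constructor
    · intro h; rw [← h]; abel
    · intro h; rw [h]; abel
  have e2 : j - i = 1 ↔ j = i + 1 := by
    constructor
    · intro h; rw [← h]; abel
    · intro h; rw [h]; abel
  have e3 : (SimpleGraph.cycleGraph (n + 3)).Adj i j ↔ (j = i + -1 ∨ j = i + 1) := by
    rw [← e1, ← e2]; exact SimpleGraph.cycleGraph_adj (n := n + 1)
  rw [SimpleGraph.adjMatrix_apply, Matrix.add_apply]
  simp only [e3]
  simp only [pm, of_apply]
  by_cases ha : j = i + 1
  · simp [ha, h12]
  · simp [ha]

lemma cyc_shL : shL (SimpleGraph.cycleGraph (n + 3)) = -(pm 1 + pm (-1)) := by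
  rw [shL_eq, cyc_eq]
  simp only [SimpleGraph.cycleGraph_degree_three_le]
  simp

lemma cyc_sq : (pm 1 + pm (-1) : Matrix (Fin (n + 3)) (Fin (n + 3)) ℝ) * (pm 1 + pm (-1)) =
    pm (1 + 1) + pm (-(1 + 1)) + (2 : ℝ) • pm 0 := by
  simp only [add_mul, mul_add, pm_mul]
  rw [show (-1 + -1 : Fin (n+3)) = -(1+1) by abel, show (1 + -1 : Fin (n+3)) = 0 by abel,
    show (-1 + 1 : Fin (n+3)) = 0 by abel]
  module

lemma cyc_tr2 : trace (shL (SimpleGraph.cycleGraph (n + 3)) * shL (SimpleGraph.cycleGraph (n + 3)))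
    = 2 * (n + 3) := by
  have h2 : -(1 + 1 : Fin (n + 3)) ≠ 0 := neg_ne_zero.2 nz2
  rw [cyc_shL, neg_mul_neg, cyc_sq]
  simp only [trace_add, trace_smul, pm_trace, if_neg nz2, if_neg h2]
  simp

lemma cyc_tr1 : trace (shL (SimpleGraph.cycleGraph (n + 3))) = 0 := by
  rw [tr1]
  simp only [SimpleGraph.cycleGraph_degree_three_le]
  simp

lemma cyc_tr3 (hn : 1 ≤ n) : trace (shL (SimpleGraph.cycleGraph (n + 3)) *
    shL (SimpleGraph.cycleGraph (n + 3)) * shL (SimpleGraph.cycleGraph (n + 3))) = 0 := by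
  have h1 : (1 : Fin (n + 3)) ≠ 0 := by simp
  have h1' : (-1 : Fin (n + 3)) ≠ 0 := neg_ne_zero.2 h1
  have h3' : -(1 + 1 + 1 : Fin (n + 3)) ≠ 0 := neg_ne_zero.2 (nz3 hn)
  rw [cyc_shL, neg_mul_neg, cyc_sq]
  simp only [mul_neg, add_mul, mul_add, pm_mul, smul_mul]
  rw [show (1 + 1 + -1 : Fin (n+3)) = 1 by abel, show (-(1 + 1) + 1 : Fin (n+3)) = -1 by abel,
    show (-(1 + 1) + -1 : Fin (n+3)) = -(1 + 1 + 1) by abel, zero_add, zero_add]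
  simp only [trace_add, trace_neg, trace_smul, pm_trace, if_neg h1, if_neg h1', if_neg h3',
    if_neg (nz3 hn)]
  simp

lemma cyc_tr4 (hn : 2 ≤ n) : trace ((shL (SimpleGraph.cycleGraph (n + 3)) *
    shL (SimpleGraph.cycleGraph (n + 3))) * (shL (SimpleGraph.cycleGraph (n + 3)) *
    shL (SimpleGraph.cycleGraph (n + 3)))) = 6 * (n + 3) := by
  have h2 := nz2 (n := n)
  have h2' : -(1 + 1 : Fin (n + 3)) ≠ 0 := neg_ne_zero.2 nz2
  have h4 := nz4 hn
  have h4' : -(1 + 1 + 1 + 1 : Fin (n + 3)) ≠ 0 := neg_ne_zero.2 (nz4 hn)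
  rw [cyc_shL, neg_mul_neg, cyc_sq]
  simp only [add_mul, mul_add, pm_mul, smul_mul, mul_smul_comm, zero_add, add_zero]
  rw [show (1 + 1 + (1 + 1) : Fin (n+3)) = 1 + 1 + 1 + 1 by abel,
    show (1 + 1 + -(1 + 1) : Fin (n+3)) = 0 by abel,
    show (-(1 + 1) + (1 + 1) : Fin (n+3)) = 0 by abel,
    show (-(1 + 1) + -(1 + 1) : Fin (n+3)) = -(1 + 1 + 1 + 1) by abel]
  simp only [trace_add, trace_smul, pm_trace, if_neg h2, if_neg h2', if_neg h4,
    if_neg h4', smul_eq_mul]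
  simp
  ring

/-- the remainder bound for the cycle -/
lemma cyc_Q (hn : 1 ≤ n) (c : ℝ) (hc : (n + 3 : ℝ) ≤ c) :
    trace ((shL (SimpleGraph.cycleGraph (n + 3)) * shL (SimpleGraph.cycleGraph (n + 3))) *
      ((SimpleGraph.cycleGraph (n + 3)).lapMatrix ℝ + c • (1 : Matrix (Fin (n + 3)) (Fin (n + 3)) ℝ))⁻¹ *
      (shL (SimpleGraph.cycleGraph (n + 3)) * shL (SimpleGraph.cycleGraph (n + 3)))) ≤ 6 := by
  have hc0 : 0 < c := by have : (0:ℝ) ≤ n := n.cast_nonneg; linarith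
  rcases Nat.lt_or_ge n 2 with h | h
  · obtain rfl : n = 1 := by omega
    obtain ⟨h1, h2⟩ := res_mul (SimpleGraph.cycleGraph (1 + 3)) c hc0
    set N := ((SimpleGraph.cycleGraph (1 + 3)).lapMatrix ℝ +
      c • (1 : Matrix (Fin (1 + 3)) (Fin (1 + 3)) ℝ))⁻¹
    have t1 := cyc_tr1 (n := 1)
    have t2 := cyc_tr2 (n := 1)
    have h3 : shL (SimpleGraph.cycleGraph (1 + 3)) * shL (SimpleGraph.cycleGraph (1 + 3)) *
        shL (SimpleGraph.cycleGraph (1 + 3)) = (4 : ℝ) • shL (SimpleGraph.cycleGraph (1 + 3)) := by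
      rw [cyc_shL, neg_mul_neg, cyc_sq]
      simp only [mul_neg, add_mul, mul_add, pm_mul, smul_mul, smul_neg, smul_add]
      rw [show (1 + 1 + 1 : Fin (1+3)) = -1 by decide, show (1 + 1 + -1 : Fin (1+3)) = 1 by decide,
        show (-(1 + 1) + 1 : Fin (1+3)) = -1 by decide,
        show (-(1 + 1) + -1 : Fin (1+3)) = 1 by decide, zero_add, zero_add]
      module
    set M := shL (SimpleGraph.cycleGraph (1 + 3))
    have q0 : trace ((M * M) * N * (M * M)) = 4 * trace (M * M * N) := by
      rw [trace_mul_comm, ← mul_assoc, ← mul_assoc, h3]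
      simp
    have q1 : (c + 2) * trace (M * N) = - trace (M * M * N) := by
      have : M * M * N = M - (c + 2) • (M * N) := by
        rw [mul_assoc]
        conv_lhs => rw [h2]
        rw [mul_sub, mul_one, mul_smul_comm]
      rw [this, trace_sub, trace_smul, t1, smul_eq_mul]; ring
    have q2 : (c + 2) * trace (M * M * N) = 8 - 4 * trace (M * N) := by
      have : (4 : ℝ) • (M * N) = M * M - (c + 2) • (M * M * N) := by
        rw [← smul_mul, ← h3, mul_assoc (M * M)]
        conv_lhs => rw [h2]
        rw [mul_sub, mul_one, mul_smul_comm]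
      have := congrArg trace this
      rw [trace_sub, trace_smul, trace_smul, t2, smul_eq_mul, smul_eq_mul] at this
      push_cast at this
      linarith
    rw [q0]
    set q := trace (M * M * N)
    set r := trace (M * N)
    have hc4 : 4 ≤ c := by push_cast at hc; linarith
    have q3 : ((c + 2) ^ 2 - 4) * q = 8 * (c + 2) := by
      linear_combination (c + 2) * q2 - 4 * q1
    by_contra hcon
    push Not at hcon
    have : ((c + 2) ^ 2 - 4) * (3 / 2) < ((c + 2) ^ 2 - 4) * q := by
      apply mul_lt_mul_of_pos_left
      · linarith
      · nlinarith
    nlinarith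
  · have h1 := Q_le (SimpleGraph.cycleGraph (n + 3)) c hc0
    rw [cyc_tr4 h] at h1
    by_contra hcon
    push Not at hcon
    nlinarith

end cyc

theorem stmt_10 (v : ℕ) (hv : 3 ≤ v) (G : SimpleGraph (Fin v)) [DecidableRel G.Adj]
    (hconn : G.Connected) (hedges : G.edgeFinset.card = v) :
    ∀ y : ℝ, 1 ≤ y →
      Matrix.trace (((SimpleGraph.cycleGraph v).lapMatrix ℝ +
        ((v : ℝ) * y) • (1 : Matrix (Fin v) (Fin v) ℝ))⁻¹) ≤
      Matrix.trace ((G.lapMatrix ℝ +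
        ((v : ℝ) * y) • (1 : Matrix (Fin v) (Fin v) ℝ))⁻¹) := by
  intro y hy
  by_cases hreg : ∀ i, G.degree i = 2
  · obtain ⟨e⟩ := iso_of_regular v G hconn hedges hreg
    exact (trace_of_iso v G _ e _).le
  have hvr : (3 : ℝ) ≤ v := by exact_mod_cast hv
  have hc : (v : ℝ) ≤ v * y := by nlinarith
  set c : ℝ := v * y with hcdef
  have hc0 : 0 < c := by linarith
  have hlow : ∀ i, 1 ≤ G.degree i := by
    intro i
    haveI : Nontrivial (Fin v) := Fin.nontrivial_iff_two_le.2 (by omega)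
    exact hconn.preconnected.degree_pos_of_nontrivial i
  have hup : ∀ i, G.degree i + 1 ≤ v := by
    intro i
    have := G.degree_lt_card_verts i
    simpa using this
  have hsum : ∑ i, G.degree i = 2 * v := by
    rw [G.sum_degrees_eq_twice_card_edges, hedges]
  have hsumR : ∑ i, (G.degree i : ℝ) = 2 * v := by exact_mod_cast hsum
  have hE : ∑ i, ((G.degree i : ℝ) - 2) = 0 := by
    rw [Finset.sum_sub_distrib, hsumR]; simp; ring
  -- a vertex of degree at least three
  obtain ⟨i₀, hi₀⟩ : ∃ i, 3 ≤ G.degree i := by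
    by_contra hcon
    push Not at hcon
    apply hreg
    have hle : ∀ i ∈ Finset.univ, G.degree i ≤ 2 := fun i _ => by have := hcon i; omega
    have := (Finset.sum_eq_sum_iff_of_le hle).1 (by rw [hsum]; simp; ring)
    exact fun i => this i (Finset.mem_univ i)
  have hv4 : 4 ≤ v := by have := hup i₀; omega
  obtain ⟨n, rfl⟩ : ∃ n, v = n + 3 := ⟨v - 3, by omega⟩
  have hn : 1 ≤ n := by omega
  set S := ∑ i, ((G.degree i : ℝ) - 2) ^ 2 with hS
  have hS2 : 2 ≤ S := by
    have h1 : S = ∑ i, ((G.degree i : ℝ) - 2) * ((G.degree i : ℝ) - 1) := by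
      rw [hS, ← add_zero (∑ i, ((G.degree i : ℝ) - 2) ^ 2), ← hE, ← Finset.sum_add_distrib]
      exact Finset.sum_congr rfl fun i _ => by ring
    rw [h1]
    refine le_trans ?_ (Finset.single_le_sum (f := fun i => ((G.degree i : ℝ) - 2) * ((G.degree i : ℝ) - 1))
      (fun i _ => ?_) (Finset.mem_univ i₀))
    · have : (3 : ℝ) ≤ G.degree i₀ := by exact_mod_cast hi₀
      nlinarith
    · rcases Nat.lt_or_ge (G.degree i) 2 with h | h
      · have : G.degree i = 1 := by have := hlow i; omega
        simp [this]
      · have : (2 : ℝ) ≤ G.degree i := by exact_mod_cast h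
        apply mul_nonneg <;> linarith
  have hcube : ∑ i, ((G.degree i : ℝ) - 2) ^ 3 ≤ ((n : ℝ) - 1) * S := by
    have h1 : ((n : ℝ) - 1) * S = ∑ i, (((n : ℝ) - 1) * ((G.degree i : ℝ) - 2) ^ 2
        + n * ((G.degree i : ℝ) - 2)) := by
      rw [Finset.sum_add_distrib, ← Finset.mul_sum, ← Finset.mul_sum, hE]; simp [hS]
    rw [h1]
    refine Finset.sum_le_sum fun i _ => ?_
    rcases Nat.lt_or_ge (G.degree i) 2 with h | h
    · have : G.degree i = 1 := by have := hlow i; omega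
      rw [this]; push_cast; nlinarith
    · have h2 : (2 : ℝ) ≤ G.degree i := by exact_mod_cast h
      have h3 : (G.degree i : ℝ) + 1 ≤ n + 3 := by exact_mod_cast hup i
      have : 0 ≤ ((G.degree i : ℝ) - 2) * (((G.degree i : ℝ) - 1) * (n + 2 - G.degree i)) :=
        mul_nonneg (by linarith) (mul_nonneg (by linarith) (by linarith))
      nlinarith
  have hlin : ∑ i, ((G.degree i : ℝ) - 2) * G.degree i = S := by
    have : S = S + 2 * ∑ i, ((G.degree i : ℝ) - 2) := by rw [hE]; ring
    rw [this, hS, Finset.mul_sum, ← Finset.sum_add_distrib]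
    exact Finset.sum_congr rfl fun i _ => by ring
  obtain ⟨g1, g2⟩ := res_mul G c hc0
  obtain ⟨k1, k2⟩ := res_mul (SimpleGraph.cycleGraph (n + 3)) c hc0
  have eG := expand _ _ _ g1 g2
  have eC := expand _ _ _ k1 k2
  rw [tr1, tr2, tr3, hE, hsumR, ← hS, hlin] at eG
  rw [cyc_tr1, cyc_tr2, cyc_tr3 hn] at eC
  have qG := Q_nonneg G c hc0
  have qC := cyc_Q hn c (by push_cast at hc; linarith)
  have a3 := trA3_nonneg G
  have hm : 0 < (c + 2) ^ 4 := by positivity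
  refine le_of_mul_le_mul_left ?_ hm
  rw [eG, eC]
  push_cast at hc ⊢
  nlinarith [mul_nonneg (sub_nonneg.2 hS2) (show (0:ℝ) ≤ c - n by linarith)]
end

section
/- Let v ≥ 2 and δ ≥ 1 be integers. There exists x₀ > 0 such that for every real x ≥ x₀ and for all δ-regular simple graphs G and G′ on v vertices with η(Gᶜ) < η(G′ᶜ) (where Gᶜ denotes the complement graph), one has det( L(G) + vx·I ) > det( L(G′) + vx·I ) and trace( (L(G) + vx·I)^{−1} ) < trace( (L(G′) + vx·I)^{−1} ). -/
/-- The number of V-subgraphs of `G`: 3-element vertex subsets carrying exactly two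
edges of `G` (counted here as ordered pairs, hence the value `4`). -/
def numVSubgraphs {V : Type*} [Fintype V] [DecidableEq V] (G : SimpleGraph V)
    [DecidableRel G.Adj] : ℕ :=
  ((Finset.univ.powersetCard 3).filter
    (fun s => ((s ×ˢ s).filter fun p => G.Adj p.1 p.2).card = 4)).card

open Filter Topology in
theorem aux_analysis {n : ℕ} (d e : Fin n → ℝ) (h1 : ∑ i, d i = ∑ i, e i)
    (h2 : ∑ i, d i ^ 2 = ∑ i, e i ^ 2) (h3 : ∑ i, e i ^ 3 < ∑ i, d i ^ 3) :
    ∀ᶠ y : ℝ in atTop, (0 < y ∧ (∀ i, 0 < y + d i) ∧ (∀ i, 0 < y + e i)) ∧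
      ∏ i, (y + e i) < ∏ i, (y + d i) ∧ ∑ i, (y + d i)⁻¹ < ∑ i, (y + e i)⁻¹ := by
  have hpos : ∀ d : Fin n → ℝ, ∀ᶠ y : ℝ in atTop, ∀ i, 0 < y + d i := by
    intro d
    rw [eventually_all]
    intro i
    filter_upwards [eventually_gt_atTop (-d i)] with y hy
    linarith
  have lim1 : ∀ c : ℝ, Tendsto (fun y : ℝ => y / (y + c)) atTop (𝓝 1) := by
    intro c
    have h : Tendsto (fun y : ℝ => 1 - c / (y + c)) atTop (𝓝 (1 - 0)) :=
      tendsto_const_nhds.sub (Tendsto.const_div_atTop (tendsto_atTop_add_const_right _ _ tendsto_id) c)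
    rw [sub_zero] at h
    refine h.congr' ?_
    filter_upwards [eventually_gt_atTop (-c)] with y hy
    have : y + c ≠ 0 := by linarith
    field_simp
    ring
  have lim3 : ∀ d : Fin n → ℝ, Tendsto (fun y : ℝ => ∑ i, d i ^ 3 * (y / (y + d i))) atTop
      (𝓝 (∑ i, d i ^ 3)) := by
    intro d
    have := tendsto_finsetSum (Finset.univ : Finset (Fin n))
      (fun i _ => (lim1 (d i)).const_mul (d i ^ 3))
    simpa using this
  have expand : ∀ (d : Fin n → ℝ) (y : ℝ), 0 < y → (∀ i, 0 < y + d i) →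
      y ^ 4 * ∑ i, (y + d i)⁻¹ = n * y ^ 3 - y ^ 2 * ∑ i, d i + y * ∑ i, d i ^ 2
        - ∑ i, d i ^ 3 * (y / (y + d i)) := by
    intro d y hy hd
    have hn : (n : ℝ) * y ^ 3 = ∑ i : Fin n, y ^ 3 := by simp
    rw [hn, Finset.mul_sum, Finset.mul_sum, Finset.mul_sum, ← Finset.sum_sub_distrib,
      ← Finset.sum_add_distrib, ← Finset.sum_sub_distrib]
    refine Finset.sum_congr rfl fun i _ => ?_
    have := (hd i).ne'
    field_simp
    ring
  have A : ∀ᶠ y : ℝ in atTop, (0 < y ∧ (∀ i, 0 < y + d i) ∧ (∀ i, 0 < y + e i)) ∧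
      ∑ i, (y + d i)⁻¹ < ∑ i, (y + e i)⁻¹ := by
    filter_upwards [hpos d, hpos e, eventually_gt_atTop 0, (lim3 e).eventually_lt (lim3 d) h3]
      with y a b c f
    refine ⟨⟨c, a, b⟩, ?_⟩
    have := expand d y c a
    have := expand e y c b
    rw [h1, h2] at *
    have : y ^ 4 * ∑ i, (y + d i)⁻¹ < y ^ 4 * ∑ i, (y + e i)⁻¹ := by linarith
    exact lt_of_mul_lt_mul_left this (by positivity)
  obtain ⟨Y, hY⟩ := eventually_atTop.1 A
  set f : ℝ → ℝ := fun y => ∑ i, Real.log (y + d i) - ∑ i, Real.log (y + e i) with hf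
  have hder : ∀ y, Y ≤ y → HasDerivAt f (∑ i, (y + d i)⁻¹ - ∑ i, (y + e i)⁻¹) y := by
    intro y hy
    obtain ⟨⟨_, a, b⟩, _⟩ := hY y hy
    refine HasDerivAt.sub ?_ ?_
    · refine HasDerivAt.fun_sum fun i _ => ?_
      have := ((hasDerivAt_id y).add_const (d i)).log (a i).ne'
      simpa using this
    · refine HasDerivAt.fun_sum fun i _ => ?_
      have := ((hasDerivAt_id y).add_const (e i)).log (b i).ne'
      simpa using this
  have hanti : StrictAntiOn f (Set.Ici Y) := by
    refine strictAntiOn_of_deriv_neg (convex_Ici Y)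
      (fun y hy => (hder y hy).continuousAt.continuousWithinAt) ?_
    intro y hy
    rw [interior_Ici] at hy
    rw [(hder y (le_of_lt hy)).deriv]
    linarith [(hY y (le_of_lt hy)).2]
  have hl : ∀ d : Fin n → ℝ, Tendsto (fun y : ℝ => ∑ i, Real.log (y / (y + d i))) atTop (𝓝 0) := by
    intro d
    have := tendsto_finsetSum (Finset.univ : Finset (Fin n))
      (fun i _ => (lim1 (d i)).log one_ne_zero)
    simpa using this
  have hlim : Tendsto f atTop (𝓝 0) := by
    have := (hl e).sub (hl d)
    rw [sub_zero] at this
    refine this.congr' ?_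
    filter_upwards [A] with y hy
    obtain ⟨⟨c, a, b⟩, _⟩ := hy
    have q : ∀ d : Fin n → ℝ, (∀ i, 0 < y + d i) → ∑ i, Real.log (y / (y + d i)) =
        ∑ i : Fin n, Real.log y - ∑ i, Real.log (y + d i) := by
      intro d hd
      rw [← Finset.sum_sub_distrib]
      exact Finset.sum_congr rfl fun i _ => Real.log_div c.ne' (hd i).ne'
    rw [q d a, q e b]
    simp only [hf]
    ring
  filter_upwards [eventually_ge_atTop Y] with y hy
  obtain ⟨⟨c, a, b⟩, h⟩ := hY y hy
  refine ⟨⟨c, a, b⟩, ?_, h⟩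
  have h1 : f (y + 1) < f y := hanti hy (by simp only [Set.mem_Ici]; linarith) (by linarith)
  have h2 : 0 ≤ f (y + 1) := by
    refine le_of_tendsto hlim ?_
    filter_upwards [eventually_ge_atTop (y + 1)] with z hz
    exact hanti.antitoneOn (by simp only [Set.mem_Ici]; linarith)
      (by simp only [Set.mem_Ici]; linarith) hz
  have h3 : 0 < f y := by linarith
  simp only [hf] at h3
  rw [← Real.log_prod (fun i _ => (a i).ne'), ← Real.log_prod (fun i _ => (b i).ne'), sub_pos] at h3
  exact (Real.log_lt_log_iff (Finset.prod_pos fun i _ => b i) (Finset.prod_pos fun i _ => a i)).1 h3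

theorem aux_diag {n : ℕ} (L : Matrix (Fin n) (Fin n) ℝ) (hL : L.IsHermitian) :
    ∃ d : Fin n → ℝ, (∀ k : ℕ, (L ^ k).trace = ∑ i, d i ^ k) ∧
      (∀ y : ℝ, (L + y • (1 : Matrix (Fin n) (Fin n) ℝ)).det = ∏ i, (y + d i)) ∧
      (∀ y : ℝ, (∀ i, 0 < y + d i) →
        ((L + y • (1 : Matrix (Fin n) (Fin n) ℝ))⁻¹).trace = ∑ i, (y + d i)⁻¹) := by
  obtain ⟨U, V, d, hUV, hVU, h⟩ : ∃ (U V : Matrix (Fin n) (Fin n) ℝ) (d : Fin n → ℝ),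
      U * V = 1 ∧ V * U = 1 ∧ L = U * Matrix.diagonal d * V := by
    refine ⟨hL.eigenvectorUnitary, star (hL.eigenvectorUnitary : Matrix (Fin n) (Fin n) ℝ),
      hL.eigenvalues, ?_, ?_, ?_⟩
    · simp
    · simp
    · have := hL.spectral_theorem
      simpa [Unitary.conjStarAlgAut_apply] using this
  have key : ∀ y : ℝ, L + y • (1 : Matrix (Fin n) (Fin n) ℝ) =
      U * Matrix.diagonal (fun i => y + d i) * V := by
    intro y
    have : Matrix.diagonal (fun i => y + d i) =
        Matrix.diagonal d + y • (1 : Matrix (Fin n) (Fin n) ℝ) := by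
      ext i j
      by_cases hij : i = j
      · subst hij; simp [add_comm]
      · simp [hij]
    rw [this, mul_add, add_mul, ← h]
    simp [hUV]
  have htr : ∀ D : Matrix (Fin n) (Fin n) ℝ, (U * D * V).trace = D.trace := by
    intro D
    rw [Matrix.trace_mul_comm, ← mul_assoc, hVU, one_mul]
  refine ⟨d, ?_, ?_, ?_⟩
  · intro k
    have : L ^ k = U * Matrix.diagonal (fun i => d i ^ k) * V := by
      induction k with
      | zero => simp [hUV]
      | succ k ih =>
        rw [pow_succ, ih]
        conv_lhs => rw [h]
        have : U * Matrix.diagonal (fun i => d i ^ k) * V * (U * Matrix.diagonal d * V) =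
          U * Matrix.diagonal (fun i => d i ^ k) * (V * U) * Matrix.diagonal d * V := by
          simp only [mul_assoc]
        rw [this, hVU, mul_one, mul_assoc U, Matrix.diagonal_mul_diagonal]
        simp only [pow_succ]
    rw [this, htr, Matrix.trace_diagonal]
  · intro y
    rw [key, Matrix.det_mul, Matrix.det_mul, Matrix.det_diagonal, mul_right_comm, ← Matrix.det_mul,
      hUV, Matrix.det_one, one_mul]
  · intro y hy
    have : (L + y • (1 : Matrix (Fin n) (Fin n) ℝ))⁻¹ =
        U * Matrix.diagonal (fun i => (y + d i)⁻¹) * V := by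
      refine Matrix.inv_eq_right_inv ?_
      rw [key]
      have : U * Matrix.diagonal (fun i => y + d i) * V *
          (U * Matrix.diagonal (fun i => (y + d i)⁻¹) * V) =
          U * Matrix.diagonal (fun i => y + d i) * (V * U) *
            Matrix.diagonal (fun i => (y + d i)⁻¹) * V := by
        simp only [mul_assoc]
      rw [this, hVU, mul_one, mul_assoc U, Matrix.diagonal_mul_diagonal]
      have : (fun i => (y + d i) * (y + d i)⁻¹) = fun _ => (1 : ℝ) := by
        funext i
        exact mul_inv_cancel₀ (hy i).ne'
      rw [this, Matrix.diagonal_one, mul_one, hUV]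
    rw [this, htr, Matrix.trace_diagonal]

theorem aux_fibre {V : Type*} [Fintype V] [DecidableEq V] (H : SimpleGraph V)
    [DecidableRel H.Adj] (a b c : V) (hab : H.Adj a b) (hbc : H.Adj b c) (hac : a ≠ c)
    (h : ¬ H.Adj a c) :
    ((Finset.univ : Finset (V × V × V)).filter fun p => (H.Adj p.1 p.2.1 ∧ H.Adj p.2.1 p.2.2 ∧
      p.1 ≠ p.2.2 ∧ ¬ H.Adj p.1 p.2.2) ∧ ({p.1, p.2.1, p.2.2} : Finset V) = {a, b, c}).card = 2 := by
  rw [Finset.card_eq_two]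
  refine ⟨(a, b, c), (c, b, a), by simp [hac], ?_⟩
  have h1 := hab.ne
  have h2 := hbc.ne
  have hba := hab.symm
  have hcb := hbc.symm
  have h' : ¬ H.Adj c a := fun q => h q.symm
  ext ⟨x, y, z⟩
  simp only [Finset.mem_filter, Finset.mem_univ, true_and, Finset.mem_insert,
    Finset.mem_singleton, Prod.mk.injEq]
  constructor
  · rintro ⟨⟨hxy, hyz, hxz, hn⟩, he⟩
    have hx : x ∈ ({a, b, c} : Finset V) := by rw [← he]; simp
    have hy : y ∈ ({a, b, c} : Finset V) := by rw [← he]; simp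
    have hz : z ∈ ({a, b, c} : Finset V) := by rw [← he]; simp
    simp only [Finset.mem_insert, Finset.mem_singleton] at hx hy hz
    have n1 := hxy.ne
    have n2 := hyz.ne
    clear he
    rcases hx with rfl | rfl | rfl <;> rcases hy with rfl | rfl | rfl <;>
      rcases hz with rfl | rfl | rfl <;> simp_all
  · rintro (⟨rfl, rfl, rfl⟩ | ⟨rfl, rfl, rfl⟩)
    · exact ⟨⟨hab, hbc, hac, h⟩, rfl⟩
    · refine ⟨⟨hcb, hba, hac.symm, h'⟩, ?_⟩
      ext w; simp; tauto

theorem aux_four {V : Type*} [DecidableEq V] (H : SimpleGraph V)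
    [DecidableRel H.Adj] (a b c : V) (hab : a ≠ b) (hbc : b ≠ c) (hac : a ≠ c) :
    ((({a, b, c} : Finset V) ×ˢ ({a, b, c} : Finset V)).filter fun p => H.Adj p.1 p.2).card =
      2 * ((if H.Adj a b then 1 else 0) + (if H.Adj b c then 1 else 0)
        + (if H.Adj a c then 1 else 0)) := by
  rw [Finset.card_filter, Finset.sum_product]
  simp only [Finset.sum_insert (show a ∉ ({b, c} : Finset V) by simp [hab, hac]),
    Finset.sum_insert (show b ∉ ({c} : Finset V) by simp [hbc]), Finset.sum_singleton,
    SimpleGraph.irrefl, H.adj_comm b a, H.adj_comm c a, H.adj_comm c b]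
  simp only [if_false]
  ring

theorem aux_count {V : Type*} [Fintype V] [DecidableEq V] (H : SimpleGraph V)
    [DecidableRel H.Adj] :
    ((Finset.univ : Finset (V × V × V)).filter fun p => H.Adj p.1 p.2.1 ∧ H.Adj p.2.1 p.2.2 ∧
      p.1 ≠ p.2.2 ∧ ¬ H.Adj p.1 p.2.2).card = 2 * numVSubgraphs H := by
  unfold numVSubgraphs
  rw [Finset.card_eq_sum_card_fiberwise (f := fun p : V × V × V => ({p.1, p.2.1, p.2.2} : Finset V))
    (t := (Finset.univ.powersetCard 3).filter
    (fun s => ((s ×ˢ s).filter fun p => H.Adj p.1 p.2).card = 4))]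
  · rw [Finset.sum_const_nat (m := 2), mul_comm]
    intro s hs
    simp only [Finset.mem_filter, Finset.mem_powersetCard] at hs
    obtain ⟨⟨_, h3⟩, h4⟩ := hs
    obtain ⟨a, b, c, hab, hac, hbc, rfl⟩ := Finset.card_eq_three.1 h3
    rw [aux_four H a b c hab hbc hac] at h4
    rw [Finset.filter_filter]
    by_cases x : H.Adj a b <;> by_cases y : H.Adj b c <;> by_cases z : H.Adj a c <;>
      simp [x, y, z] at h4
    · exact aux_fibre H a b c x y hac z
    · have e : ({a, b, c} : Finset V) = {b, a, c} := by ext w; simp; tauto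
      rw [e]
      exact aux_fibre H b a c x.symm z hbc y
    · have e : ({a, b, c} : Finset V) = {a, c, b} := by ext w; simp; tauto
      rw [e]
      exact aux_fibre H a c b z y.symm hab x
  · rintro ⟨a, b, c⟩ hp
    simp only [Finset.coe_filter, Finset.mem_univ, true_and, Set.mem_ofPred_eq] at hp
    obtain ⟨hab, hbc, hac, h⟩ := hp
    simp only [Finset.coe_filter, Set.mem_ofPred_eq, Finset.mem_powersetCard]
    refine ⟨⟨Finset.subset_univ _, Finset.card_eq_three.2 ⟨a, b, c, hab.ne, hac, hbc.ne, rfl⟩⟩, ?_⟩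
    rw [aux_four H a b c hab.ne hbc.ne hac]
    simp [hab, hbc, h]

theorem aux_trace_count {V : Type*} [Fintype V] [DecidableEq V] (G : SimpleGraph V)
    [DecidableRel G.Adj] :
    ((Gᶜ.adjMatrix ℝ) * (Gᶜ.adjMatrix ℝ) * (G.adjMatrix ℝ)).trace = 2 * numVSubgraphs Gᶜ := by
  have := aux_count Gᶜ
  rw [Finset.card_filter] at this
  have h : ((2 * numVSubgraphs Gᶜ : ℕ) : ℝ) = 2 * numVSubgraphs Gᶜ := by push_cast; rfl
  rw [← h, ← this, Fintype.sum_prod_type]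
  simp only [Fintype.sum_prod_type]
  push_cast
  simp only [Matrix.trace, Matrix.diag_apply, Matrix.mul_apply, Finset.sum_mul]
  refine Finset.sum_congr rfl fun a _ => ?_
  rw [Finset.sum_comm]
  refine Finset.sum_congr rfl fun b _ => Finset.sum_congr rfl fun c _ => ?_
  simp only [SimpleGraph.adjMatrix_apply, SimpleGraph.compl_adj, G.adj_comm c a]
  by_cases h : a = c
  · subst h; simp
  · by_cases h1 : a = b <;> by_cases h2 : b = c <;> by_cases x : G.Adj a b <;>
     by_cases y : G.Adj b c <;> by_cases z : G.Adj a c <;> simp [h, h1, h2, x, y, z]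

theorem aux_J {V : Type*} [Fintype V] [DecidableEq V] (G : SimpleGraph V)
    [DecidableRel G.Adj] (δ : ℕ) (hG : G.IsRegularOfDegree δ) :
    ((G.adjMatrix ℝ) ^ 2).trace = Fintype.card V * δ ∧
    G.lapMatrix ℝ = (δ : ℝ) • 1 - G.adjMatrix ℝ ∧
    ((G.adjMatrix ℝ) ^ 3).trace = 2 * numVSubgraphs Gᶜ - (Fintype.card V : ℝ) ^ 2 * δ
      + 2 * Fintype.card V * (1 + δ) * δ - 2 * Fintype.card V * δ := by
  set A := G.adjMatrix ℝ with hA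
  set J : Matrix V V ℝ := Matrix.of fun _ _ => 1 with hJ
  have t2 : (A ^ 2).trace = Fintype.card V * δ := by
    rw [pow_two]
    simp only [Matrix.trace, Matrix.diag_apply, hA, SimpleGraph.adjMatrix_mul_self_apply_self,
      hG.degree_eq]
    simp
  refine ⟨t2, ?_, ?_⟩
  · ext i j
    by_cases hij : i = j
    · subst hij; simp [SimpleGraph.lapMatrix, SimpleGraph.degMatrix, hG.degree_eq, hA]
    · simp [SimpleGraph.lapMatrix, SimpleGraph.degMatrix, hij, hA]
  have hB : Gᶜ.adjMatrix ℝ = J - 1 - A := by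
    ext i j
    by_cases hij : i = j
    · subst hij; simp [hA, hJ]
    · by_cases h : G.Adj i j <;> simp [hA, hJ, hij, h]
  have hAJ : A * J = (δ : ℝ) • J := by
    ext i j
    simp [hA, hJ, SimpleGraph.adjMatrix_mul_apply, hG.degree_eq]
  have hJA : J * A = (δ : ℝ) • J := by
    ext i j
    simp [hA, hJ, SimpleGraph.mul_adjMatrix_apply, hG.degree_eq]
  have hJJ : J * J = (Fintype.card V : ℝ) • J := by
    ext i j
    simp [hJ, Matrix.mul_apply]
  have tJ : J.trace = Fintype.card V := by simp [hJ, Matrix.trace]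
  have tA : A.trace = 0 := by simp [hA]
  have e := aux_trace_count G
  rw [hB] at e
  have ex : (J - 1 - A) * (J - 1 - A) * A = (J * (J * A)) - J * A - J * A - (J * A) * A - A * (J * A)
      + A + A ^ 2 + A ^ 2 + A ^ 3 := by
    noncomm_ring
  rw [← hA, ex] at e
  simp only [hJA, Matrix.mul_smul, Matrix.smul_mul, hJJ, hAJ, Matrix.trace_add, Matrix.trace_sub,
    Matrix.trace_smul, tJ, tA, t2, smul_eq_mul] at e
  linarith

theorem aux_pow {v : ℕ} (G : SimpleGraph (Fin v))
    [DecidableRel G.Adj] (δ : ℕ) (hG : G.IsRegularOfDegree δ) :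
    ((G.lapMatrix ℝ) ^ 1).trace = v * δ ∧
    ((G.lapMatrix ℝ) ^ 2).trace = v * δ ^ 2 + v * δ ∧
    ((G.lapMatrix ℝ) ^ 3).trace = v * δ ^ 3 + 3 * v * δ ^ 2 - (2 * numVSubgraphs Gᶜ - (v : ℝ) ^ 2 * δ
      + 2 * v * (1 + δ) * δ - 2 * v * δ) := by
  obtain ⟨t2, hL, t3⟩ := aux_J G δ hG
  have tA : (G.adjMatrix ℝ).trace = 0 := by simp
  rw [hL]
  generalize G.adjMatrix ℝ = A at *
  rw [Fintype.card_fin] at *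
  have e2 : ((δ : ℝ) • (1 : Matrix (Fin v) (Fin v) ℝ) - A) ^ 2 =
      ((δ : ℝ) ^ 2) • (1 : Matrix (Fin v) (Fin v) ℝ) - (2 * (δ : ℝ)) • A + A ^ 2 := by
    have hc : A * A = A ^ 2 := (pow_two A).symm
    rw [pow_two, sub_mul, mul_sub, mul_sub, hc]
    simp only [Matrix.smul_mul, Matrix.mul_smul, one_mul, mul_one, smul_smul]
    module
  have e3 : ((δ : ℝ) • (1 : Matrix (Fin v) (Fin v) ℝ) - A) ^ 3 =
      ((δ : ℝ) ^ 3) • (1 : Matrix (Fin v) (Fin v) ℝ) - (3 * (δ : ℝ) ^ 2) • A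
        + (3 * (δ : ℝ)) • A ^ 2 - A ^ 3 := by
    have hc : A ^ 2 * A = A ^ 3 := (pow_succ A 2).symm
    rw [pow_succ, e2]
    simp only [mul_sub, add_mul, sub_mul, Matrix.smul_mul, Matrix.mul_smul, one_mul, mul_one,
      smul_smul, hc, ← pow_two]
    module
  rw [pow_one, e2, e3]
  simp only [Matrix.trace_add, Matrix.trace_sub, Matrix.trace_smul, Matrix.trace_one,
    Fintype.card_fin, tA, t2, t3, smul_eq_mul]
  refine ⟨?_, ?_, ?_⟩ <;> ring

theorem aux_pair (v δ : ℕ) (hv : 2 ≤ v) (G G' : SimpleGraph (Fin v)) [DecidableRel G.Adj]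
    [DecidableRel G'.Adj] (hG : G.IsRegularOfDegree δ) (hG' : G'.IsRegularOfDegree δ)
    (h : numVSubgraphs Gᶜ < numVSubgraphs G'ᶜ) :
    ∀ᶠ x : ℝ in Filter.atTop,
      Matrix.det (G'.lapMatrix ℝ + ((v : ℝ) * x) • (1 : Matrix (Fin v) (Fin v) ℝ)) <
          Matrix.det (G.lapMatrix ℝ + ((v : ℝ) * x) • (1 : Matrix (Fin v) (Fin v) ℝ)) ∧
        Matrix.trace ((G.lapMatrix ℝ + ((v : ℝ) * x) • (1 : Matrix (Fin v) (Fin v) ℝ))⁻¹) <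
          Matrix.trace ((G'.lapMatrix ℝ + ((v : ℝ) * x) • (1 : Matrix (Fin v) (Fin v) ℝ))⁻¹) := by
  have herm : ∀ (G : SimpleGraph (Fin v)) [DecidableRel G.Adj], (G.lapMatrix ℝ).IsHermitian := by
    intro G _
    have := G.isSymm_lapMatrix (R := ℝ)
    rw [Matrix.IsHermitian, Matrix.conjTranspose_eq_transpose_of_trivial]
    exact this
  obtain ⟨d, dp, dd, dt⟩ := aux_diag _ (herm G)
  obtain ⟨e, ep, ed, et⟩ := aux_diag _ (herm G')
  obtain ⟨p1, p2, p3⟩ := aux_pow G δ hG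
  obtain ⟨q1, q2, q3⟩ := aux_pow G' δ hG'
  have hh : (numVSubgraphs Gᶜ : ℝ) < numVSubgraphs G'ᶜ := by exact_mod_cast h
  rw [dp] at p1 p2 p3
  rw [ep] at q1 q2 q3
  simp only [pow_one] at p1 q1
  have key := aux_analysis d e (p1.trans q1.symm) (p2.trans q2.symm) (by rw [p3, q3]; linarith)
  have hvpos : (0 : ℝ) < v := by exact_mod_cast (by omega : 0 < v)
  have tend : Filter.Tendsto (fun x : ℝ => (v : ℝ) * x) Filter.atTop Filter.atTop :=
    Filter.tendsto_id.const_mul_atTop hvpos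
  filter_upwards [tend.eventually key] with x hx
  obtain ⟨⟨_, a, b⟩, h1, h2⟩ := hx
  rw [dd, ed, dt _ a, et _ b]
  exact ⟨h1, h2⟩

theorem stmt_18 (v δ : ℕ) (hv : 2 ≤ v) (hδ : 1 ≤ δ) :
    ∃ x₀ : ℝ, 0 < x₀ ∧ ∀ x : ℝ, x₀ ≤ x →
      ∀ (G G' : SimpleGraph (Fin v)) [DecidableRel G.Adj] [DecidableRel G'.Adj],
        G.IsRegularOfDegree δ → G'.IsRegularOfDegree δ →
        numVSubgraphs Gᶜ < numVSubgraphs G'ᶜ →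
        Matrix.det (G'.lapMatrix ℝ + ((v : ℝ) * x) • (1 : Matrix (Fin v) (Fin v) ℝ)) <
          Matrix.det (G.lapMatrix ℝ + ((v : ℝ) * x) • (1 : Matrix (Fin v) (Fin v) ℝ)) ∧
        Matrix.trace ((G.lapMatrix ℝ + ((v : ℝ) * x) • (1 : Matrix (Fin v) (Fin v) ℝ))⁻¹) <
          Matrix.trace ((G'.lapMatrix ℝ + ((v : ℝ) * x) • (1 : Matrix (Fin v) (Fin v) ℝ))⁻¹) := by
  classical
  have H : ∀ᶠ x : ℝ in Filter.atTop, ∀ (G G' : SimpleGraph (Fin v)),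
        G.IsRegularOfDegree δ → G'.IsRegularOfDegree δ →
        numVSubgraphs Gᶜ < numVSubgraphs G'ᶜ →
        Matrix.det (G'.lapMatrix ℝ + ((v : ℝ) * x) • (1 : Matrix (Fin v) (Fin v) ℝ)) <
          Matrix.det (G.lapMatrix ℝ + ((v : ℝ) * x) • (1 : Matrix (Fin v) (Fin v) ℝ)) ∧
        Matrix.trace ((G.lapMatrix ℝ + ((v : ℝ) * x) • (1 : Matrix (Fin v) (Fin v) ℝ))⁻¹) <
          Matrix.trace ((G'.lapMatrix ℝ + ((v : ℝ) * x) • (1 : Matrix (Fin v) (Fin v) ℝ))⁻¹) := by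
    simp only [Filter.eventually_all]
    intro G G' hG hG' h
    exact aux_pair v δ hv G G' hG hG' h
  obtain ⟨x₀, hx₀⟩ := Filter.eventually_atTop.1 H
  refine ⟨max x₀ 1, by positivity, ?_⟩
  intro x hx G G' i1 i2 hG hG' h
  have := hx₀ x ((le_max_left _ _).trans hx) G G' (by convert hG) (by convert hG') (by convert h)
  convert this
end
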